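/- arXiv:1510.08025 — 4 statements merged into one kernel-verified Lean document; each statement's English description precedes it below -/
import Mathlib

section
/- Let n ≥ 3 be an integer, k > 2 real, α₀ ∈ (0, 1), and let F : ℝⁿ → ℝ satisfy B := sup_{x ∈ ℝⁿ} ⟨x⟩ᵏ ( |F(x)| + sup_{0 < ‖x−y‖ ≤ 1} |F(x) − F(y)| / ‖x − y‖^{α₀} ) < ∞, where ⟨x⟩ := (1 + ‖x‖²)^{1/2}. Define the Newton potential u(x) = ∫_{ℝⁿ} ‖x − y‖^{2−n} F(y) dy. Then u is twice differentiable at every point and there exists a constant C, depending only on n, k and α₀, such that for every x ∈ ℝⁿ: ‖D²u(x)‖ + sup_{0 < ‖y − x‖ ≤ 1} ‖D²u(y) − D²u(x)‖ / ‖y − x‖^{α₀} ≤ C·B·log(4⟨x⟩)·(⟨x⟩^{−k} + ⟨x⟩^{−n}), where D²u denotes the second total derivative of u. -/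
/-!
The Newton kernel `‖z‖^(2-n)` is decomposed dyadically: with `ψ(z) = (χ(z) - χ(2z)) ‖z‖^(2-n)`,
smooth and supported in the unit ball, it is the sum of `r^(2-n) ψ(z/r)` over all dyadic `r`
(`exists_dyadic_kernel`). Hence `u` is a series of convolutions of `F` with smooth compactly
supported kernels, which is differentiated twice term by term; the pieces of `D²u` are
convolutions with `r^(-n) (D²ψ)(z/r)`.

Small scales `r < 1`. Since `D²ψ` is a derivative it has mean zero, so `F(x)` may be subtracted from
the source, and the Hölder condition bounds the piece by `B ⟨x⟩⁻ᵏ r^α`, which is summable. For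
the increment over a distance `h` the Lipschitz bound of `D²ψ` gives a further factor
`min(1, h/r)`, and the sum of `r^α min(1, h/r)` is `O(h^α)` because `0 < α < 1`
(`sum_small_min_le`).

Large scales `r ≥ 1`. A piece is bounded by `B` times the normalised mass
`r^(-n) ∫_{B(x,r)} ⟨t⟩⁻ᵏ dt`. After replacing `k` by `min k n`, this is `O(⟨x⟩⁻ᵏ)` for `r` below
`⟨x⟩`, and there are about `log ⟨x⟩` such scales; above `⟨x⟩` it is `O(r⁻ᵏ log r)`, a
geometric decay (`mass_far`, `sum_mass_le`). Increments gain `h/r ≤ h^α`. This gives the bound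
`log(4⟨x⟩) ⟨x⟩^(-min k n)` (`second_sum_le`, `second_sub_sum_le`), and
`⟨x⟩^(-min k n) ≤ ⟨x⟩⁻ᵏ + ⟨x⟩⁻ⁿ`. The same mass bound with the extra factor `r²` (this is where
`k > 2` enters) makes the series for `u` itself converge.
-/

open MeasureTheory Metric Module

set_option linter.unusedSectionVars false

/-! ### The weight -/

section Bracket

variable {E : Type*} [NormedAddCommGroup E]

/-- The Japanese bracket `⟨x⟩ = √(1 + ‖x‖²)`. -/
noncomputable def bracket (x : E) : ℝ := Real.sqrt (1 + ‖x‖ ^ 2)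

lemma one_le_bracket (x : E) : 1 ≤ bracket x := by
  unfold bracket
  rw [Real.one_le_sqrt]
  nlinarith [sq_nonneg ‖x‖]

lemma bracket_pos (x : E) : 0 < bracket x := lt_of_lt_of_le one_pos (one_le_bracket x)

lemma norm_le_bracket (x : E) : ‖x‖ ≤ bracket x := by
  unfold bracket
  apply Real.le_sqrt_of_sq_le
  linarith

lemma bracket_le_add (x t : E) : bracket x ≤ bracket t + ‖x - t‖ := by
  have h1 : ‖x‖ ≤ ‖t‖ + ‖x - t‖ := by
    calc ‖x‖ = ‖t + (x - t)‖ := by congr 1; abel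
      _ ≤ _ := norm_add_le _ _
  have h2 := norm_le_bracket t
  have h3 : bracket t ^ 2 = 1 + ‖t‖ ^ 2 := Real.sq_sqrt (by positivity)
  have h4 := bracket_pos t
  have h5 := norm_nonneg (x - t)
  have h6 := norm_nonneg x
  have h7 : bracket x = Real.sqrt (1 + ‖x‖ ^ 2) := rfl
  rw [h7]
  apply Real.sqrt_le_iff.2
  constructor
  · positivity
  · have : ‖x‖ ^ 2 ≤ (‖t‖ + ‖x - t‖) ^ 2 := by gcongr
    nlinarith [mul_nonneg h5 (sub_nonneg.2 h2)]

lemma continuous_bracket : Continuous (bracket : E → ℝ) := by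
  unfold bracket
  fun_prop

lemma continuous_bracket_rpow (s : ℝ) : Continuous (fun x : E => bracket x ^ s) :=
  continuous_bracket.rpow_const fun x => Or.inl (bracket_pos x).ne'

/-- The weight `⟨t⟩⁻ᵏ` exceeds `⟨x⟩⁻ᵏ` by at most the factor `2ᵏ` when `⟨x⟩ ≤ 2⟨t⟩`, in particular
when `‖x - t‖ ≤ ⟨x⟩ / 2`. -/
lemma bracket_rpow_neg_le {k : ℝ} (hk : 0 ≤ k) {x t : E} (h : bracket x ≤ 2 * bracket t) :
    bracket t ^ (-k) ≤ 2 ^ k * bracket x ^ (-k) := by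
  have hx := bracket_pos x
  have ht := bracket_pos t
  rw [Real.rpow_neg ht.le, Real.rpow_neg hx.le]
  have h1 : bracket x ^ k ≤ 2 ^ k * bracket t ^ k := by
    rw [← Real.mul_rpow (by norm_num) ht.le]
    exact Real.rpow_le_rpow hx.le h hk
  have h2 : 0 < bracket x ^ k := by positivity
  have h3 : 0 < bracket t ^ k := by positivity
  rw [← div_eq_mul_inv, inv_eq_one_div, div_le_div_iff₀ h3 h2]
  linarith

end Bracket

/-! ### Dilated kernels and convolutions with them -/

section Dilation

variable {E : Type*} [NormedAddCommGroup E] [InnerProductSpace ℝ E]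
variable {W : Type*} [NormedAddCommGroup W] [NormedSpace ℝ W]

/-- The dilate `z ↦ c φ(z / r)`. -/
noncomputable def dil (c r : ℝ) (φ : E → W) (z : E) : W := c • φ (r⁻¹ • z)

lemma fderiv_dil (c r : ℝ) {φ : E → W} (hφ : ContDiff ℝ 1 φ) :
    fderiv ℝ (dil c r φ) = dil (c * r⁻¹) r (fderiv ℝ φ) := by
  funext z
  unfold dil
  rw [fderiv_fun_const_smul, fderiv_comp_smul, smul_smul]
  have := (hφ.differentiable (by norm_num))
  fun_prop

lemma contDiff_dil (c r : ℝ) {m : ℕ} {φ : E → W} (hφ : ContDiff ℝ m φ) :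
    ContDiff ℝ m (dil c r φ) := by
  unfold dil
  fun_prop

lemma dil_eq_zero {c r : ℝ} (hr : 0 < r) {φ : E → W} (hφ : ∀ z, 1 < ‖z‖ → φ z = 0) {z : E}
    (hz : r < ‖z‖) : dil c r φ z = 0 := by
  unfold dil
  rw [hφ, smul_zero]
  rw [norm_smul, norm_inv, Real.norm_of_nonneg hr.le, ← div_eq_inv_mul, one_lt_div hr]
  exact hz

lemma fderiv_eq_zero_of_norm {r : ℝ} {φ : E → W} (hφ : ∀ z, r < ‖z‖ → φ z = 0) :
    ∀ z, r < ‖z‖ → fderiv ℝ φ z = 0 := by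
  intro z hz
  have : φ =ᶠ[nhds z] fun _ => 0 := by
    filter_upwards [(isOpen_lt continuous_const continuous_norm).mem_nhds hz] with w hw
    exact hφ w hw
  rw [this.fderiv_eq]
  simp

end Dilation

lemma hasCompactSupport_of_norm {E W : Type*} [NormedAddCommGroup E] [ProperSpace E]
    [Zero W] {r : ℝ} {φ : E → W} (hφ : ∀ z, r < ‖z‖ → φ z = 0) :
    HasCompactSupport φ := by
  apply HasCompactSupport.intro (isCompact_closedBall (0 : E) r)
  intro z hz
  apply hφ
  simpa using hz

section Convolution

variable {E : Type*} [NormedAddCommGroup E] [InnerProductSpace ℝ E] [FiniteDimensional ℝ E]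
  [MeasureSpace E] [BorelSpace E] [(volume : Measure E).IsAddHaarMeasure]
variable {W : Type*} [NormedAddCommGroup W] [NormedSpace ℝ W]

/-- Convolution of a scalar source with a compactly supported vector-valued kernel is
differentiated by differentiating the kernel. -/
lemma hasFDerivAt_conv {F : E → ℝ} (hF : Continuous F) {φ : E → W} (hφ : ContDiff ℝ 1 φ)
    (hc : HasCompactSupport φ) (x : E) :
    HasFDerivAt (fun x => ∫ t, F t • φ (x - t)) (∫ t, F t • fderiv ℝ φ (x - t)) x := by
  have h := hc.hasFDerivAt_convolution_right (ContinuousLinearMap.lsmul ℝ ℝ) (μ := volume)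
    (hF.locallyIntegrable) hφ x
  exact h

/-- The derivative of a compactly supported function has mean zero: convolving it with the
constant `1` is differentiating a constant. -/
lemma integral_fderiv_sub_eq_zero {φ : E → W} (hφ : ContDiff ℝ 1 φ)
    (hc : HasCompactSupport φ) (x : E) : ∫ t, fderiv ℝ φ (x - t) = 0 := by
  have h := hasFDerivAt_conv (F := fun _ => (1 : ℝ)) continuous_const hφ hc x
  simp only [one_smul] at h
  have h2 : (fun x => ∫ t, φ (x - t)) = fun _ => ∫ t, φ t := by
    funext x
    exact integral_sub_left_eq_self φ volume x
  rw [h2] at h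
  exact h.unique (hasFDerivAt_const _ _)

end Convolution

/-! ### Dyadic decomposition of the Newton kernel -/

section Kernel

variable {E : Type*} [NormedAddCommGroup E] [InnerProductSpace ℝ E] [FiniteDimensional ℝ E]

/-- The Newton kernel is a sum of dilates of one smooth compactly supported profile
`ψ(z) = (χ(z) - χ(2z)) ‖z‖^(2-d)`, `χ` a bump function: the sum telescopes. The `j`-th term pairs
the scales `2^(-j-1)` and `2^j`. At `z = 0` both sides vanish, since `0 ^ (2 - d) = 0` for the
real power. -/
lemma exists_dyadic_kernel (d : ℕ) (hd : 3 ≤ d) : ∃ ψ : E → ℝ, ContDiff ℝ 3 ψ ∧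
    (∀ z, 1 < ‖z‖ → ψ z = 0) ∧
    ∀ z : E, HasSum (fun j : ℕ =>
      dil (((2 : ℝ) ^ (j + 1))⁻¹ ^ 2 / ((2 : ℝ) ^ (j + 1))⁻¹ ^ d) ((2 : ℝ) ^ (j + 1))⁻¹ ψ z +
      dil (((2 : ℝ) ^ j) ^ 2 / ((2 : ℝ) ^ j) ^ d) ((2 : ℝ) ^ j) ψ z) (‖z‖ ^ ((2 : ℝ) - d)) := by
  let χ : ContDiffBump (0 : E) := ⟨1 / 2, 1, by norm_num, by norm_num⟩
  have hone : ∀ z : E, ‖z‖ ≤ 1 / 2 → χ z = 1 := fun z hz =>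
    χ.one_of_mem_closedBall (by simpa [χ] using hz)
  have hzero : ∀ z : E, 1 ≤ ‖z‖ → χ z = 0 := fun z hz =>
    χ.zero_of_le_dist (by simpa [χ] using hz)
  have hker : ∀ (r : ℝ) (z : E), 0 < r → dil (r ^ 2 / r ^ d) r
      (fun z => (χ z - χ ((2 : ℝ) • z)) * (‖z‖ ^ 2 / ‖z‖ ^ d)) z =
      (χ (r⁻¹ • z) - χ ((2 : ℝ) • r⁻¹ • z)) * (‖z‖ ^ 2 / ‖z‖ ^ d) := by
    intro r z hr
    have : ‖z‖ ^ 2 / ‖z‖ ^ d = r ^ 2 / r ^ d * (‖r⁻¹ • z‖ ^ 2 / ‖r⁻¹ • z‖ ^ d) := by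
      rw [norm_smul, norm_inv, Real.norm_of_nonneg hr.le, mul_pow, mul_pow, mul_div_mul_comm,
        ← mul_assoc, inv_pow, inv_pow]
      field_simp
    simp only [dil, smul_eq_mul]
    rw [this]
    ring
  refine ⟨fun z => (χ z - χ ((2 : ℝ) • z)) * (‖z‖ ^ 2 / ‖z‖ ^ d), ?_, ?_, ?_⟩
  · rw [contDiff_iff_contDiffAt]
    intro z
    by_cases hz : z = 0
    · have : (fun z : E => (χ z - χ ((2 : ℝ) • z)) * (‖z‖ ^ 2 / ‖z‖ ^ d)) =ᶠ[nhds z]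
          fun _ => 0 := by
        filter_upwards [ball_mem_nhds z (show (0 : ℝ) < 1 / 4 by norm_num)] with w hw
        rw [hz, mem_ball_zero_iff] at hw
        rw [hone w (by linarith), hone _ (by rw [norm_smul, Real.norm_two]; linarith)]
        simp
      exact contDiffAt_const.congr_of_eventuallyEq this
    · have hn : ContDiffAt ℝ 3 (fun z : E => ‖z‖) z := contDiffAt_norm ℝ hz
      have h1 : ContDiffAt ℝ 3 (fun z : E => χ z) z := χ.contDiffAt
      have h2 : ContDiffAt ℝ 3 (fun z : E => χ ((2 : ℝ) • z)) z :=
        (χ.contDiff.comp (contDiff_const_smul (2 : ℝ))).contDiffAt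
      exact (h1.sub h2).mul ((hn.pow 2).div (hn.pow d) (by simpa using fun h => absurd h hz))
  · intro z hz
    beta_reduce
    rw [hzero z hz.le, hzero _ (by rw [norm_smul, Real.norm_two]; linarith)]
    simp
  · intro z
    have hval : ‖z‖ ^ ((2 : ℝ) - d) = 1 * (‖z‖ ^ 2 / ‖z‖ ^ d) := by
      rw [one_mul]
      by_cases hz : z = 0
      · have : (2 : ℝ) - d ≠ 0 := by
          have : (3 : ℝ) ≤ d := by exact_mod_cast hd
          intro h; linarith
        rw [hz, norm_zero, Real.zero_rpow this]
        simp
      · rw [Real.rpow_sub (norm_pos_iff.2 hz), Real.rpow_natCast]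
        norm_num
    rw [hval]
    simp_rw [hker _ z (show (0 : ℝ) < (2 ^ (_ + 1))⁻¹ by positivity),
      hker _ z (show (0 : ℝ) < 2 ^ _ by positivity), ← add_mul, inv_inv]
    by_cases hz : z = 0
    · simp [hz, hasSum_zero]
    apply HasSum.mul_right
    have hz' : 0 < ‖z‖ := norm_pos_iff.2 hz
    obtain ⟨J1, hJ1⟩ := pow_unbounded_of_one_lt (‖z‖⁻¹) (one_lt_two (α := ℝ))
    obtain ⟨J2, hJ2⟩ := pow_unbounded_of_one_lt (4 * ‖z‖) (one_lt_two (α := ℝ))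
    have hbig : ∀ j, J1 ≤ j → 1 ≤ (2 : ℝ) ^ j * ‖z‖ := by
      intro j hj
      have : (2 : ℝ) ^ J1 ≤ 2 ^ j := pow_le_pow_right₀ (by norm_num) hj
      rw [← div_le_iff₀ hz', one_div]
      linarith
    have hsmall : ∀ j, J2 ≤ j → ((2 : ℝ) ^ j)⁻¹ * ‖z‖ ≤ 1 / 4 := by
      intro j hj
      have : (2 : ℝ) ^ J2 ≤ 2 ^ j := pow_le_pow_right₀ (by norm_num) hj
      rw [inv_mul_le_iff₀ (by positivity)]
      linarith
    have htel : ∀ J : ℕ, ∑ j ∈ Finset.range J,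
        (χ ((2 : ℝ) ^ (j + 1) • z) - χ ((2 : ℝ) • (2 : ℝ) ^ (j + 1) • z) +
          (χ (((2 : ℝ) ^ j)⁻¹ • z) - χ ((2 : ℝ) • ((2 : ℝ) ^ j)⁻¹ • z))) =
        χ ((2 : ℝ) • ((2 : ℝ) ^ J)⁻¹ • z) - χ ((2 : ℝ) ^ (J + 1) • z) := by
      intro J
      induction J with
      | zero => simp
      | succ J ih =>
        rw [Finset.sum_range_succ, ih, smul_smul 2 (2 ^ (J + 1)) z,
          smul_smul 2 (2 ^ (J + 1))⁻¹ z]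
        have e1 : (2 : ℝ) * 2 ^ (J + 1) = 2 ^ (J + 1 + 1) := by ring
        have e2 : (2 : ℝ) * (2 ^ (J + 1))⁻¹ = (2 ^ J)⁻¹ := by
          rw [pow_succ]; field_simp
        rw [e1, e2]
        ring
    have hfin := htel (max J1 J2)
    rw [hone, hzero, sub_zero] at hfin
    · rw [← hfin]
      apply hasSum_sum_of_ne_finset_zero
      intro j hj
      rw [Finset.mem_range, not_lt] at hj
      have a1 := hbig (j + 1) (le_trans (le_max_left _ _) (hj.trans (Nat.le_succ j)))
      have a2 := hsmall j (le_trans (le_max_right _ _) hj)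
      have p1 : (0 : ℝ) < 2 ^ (j + 1) := by positivity
      have p2 : (0 : ℝ) < ((2 : ℝ) ^ j)⁻¹ := by positivity
      rw [hzero, hzero, hone, hone]
      · simp
      · rw [norm_smul, norm_smul, Real.norm_two, Real.norm_of_nonneg p2.le]; linarith
      · rw [norm_smul, Real.norm_of_nonneg p2.le]; linarith
      · rw [norm_smul, norm_smul, Real.norm_two, Real.norm_of_nonneg p1.le]; linarith
      · rw [norm_smul, Real.norm_of_nonneg p1.le]; linarith
    · have a1 := hbig (max J1 J2 + 1) ((le_max_left _ _).trans (Nat.le_succ _))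
      rw [norm_smul, Real.norm_of_nonneg (by positivity)]; linarith
    · have a2 := hsmall (max J1 J2) (le_max_right _ _)
      rw [norm_smul, norm_smul, Real.norm_two, Real.norm_of_nonneg (by positivity)]; linarith

end Kernel

/-! ### Mass of the weight on balls -/

section Mass

variable {E : Type*} [NormedAddCommGroup E] [InnerProductSpace ℝ E] [FiniteDimensional ℝ E]
  [MeasureSpace E] [BorelSpace E] [(volume : Measure E).IsAddHaarMeasure]
variable {W : Type*} [NormedAddCommGroup W] [NormedSpace ℝ W]

lemma integral_norm_smul_le {x : E} {ρ a : ℝ} {G g : E → ℝ} (hg : Continuous g)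
    {Θ : E → W} (h0 : ∀ t, ρ < ‖x - t‖ → Θ t = 0) (ha : ∀ t, ‖Θ t‖ ≤ a)
    (hG : ∀ t, ‖x - t‖ ≤ ρ → |G t| ≤ g t) :
    ∫ t, ‖G t • Θ t‖ ≤ a * ∫ t in closedBall x ρ, g t := by
  rw [← integral_const_mul, ← integral_indicator measurableSet_closedBall]
  apply integral_mono_of_nonneg
  · exact Filter.Eventually.of_forall fun t => norm_nonneg _
  · rw [integrable_indicator_iff measurableSet_closedBall]
    exact (continuous_const.mul hg).continuousOn.integrableOn_compact (isCompact_closedBall x ρ)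
  · refine Filter.Eventually.of_forall fun t => ?_
    by_cases ht : ‖x - t‖ ≤ ρ
    · have hm : t ∈ closedBall x ρ := by
        rw [mem_closedBall, dist_comm, dist_eq_norm]; exact ht
      simp only [Set.indicator_of_mem hm]
      rw [norm_smul, mul_comm, Real.norm_eq_abs]
      exact mul_le_mul (ha t) (hG t ht) (abs_nonneg _) ((norm_nonneg _).trans (ha t))
    · have hm : t ∉ closedBall x ρ := by
        rw [mem_closedBall, dist_comm, dist_eq_norm]; exact ht
      simp only [Set.indicator_of_notMem hm]
      rw [h0 t (not_le.1 ht)]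
      simp

lemma setIntegral_le_volume {x : E} {ρ g : ℝ} (hρ : 0 ≤ ρ) {s : Set E} (hs : MeasurableSet s)
    (hsub : s ⊆ closedBall x ρ) {f : E → ℝ}
    (hf : Continuous f) (hg : 0 ≤ g) (hfg : ∀ t ∈ s, f t ≤ g) :
    ∫ t in s, f t ≤ g * (ρ ^ finrank ℝ E * volume.real (closedBall (0 : E) 1)) := by
  have hfin : volume (closedBall x ρ) < ⊤ := (isCompact_closedBall x ρ).measure_lt_top
  have hfs : volume s < ⊤ := (measure_mono hsub).trans_lt hfin
  have h1 : ∫ t in s, f t ≤ ∫ t in s, g := by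
    apply setIntegral_mono_on _ _ hs hfg
    · exact (hf.continuousOn.integrableOn_compact (isCompact_closedBall x ρ)).mono_set hsub
    · exact integrableOn_const hfs.ne
  refine h1.trans ?_
  rw [setIntegral_const, smul_eq_mul, mul_comm, ← Measure.addHaar_real_closedBall' volume x hρ]
  exact mul_le_mul_of_nonneg_left (measureReal_mono hsub hfin.ne) hg

lemma integral_norm_smul_le_const {x : E} {ρ a g : ℝ} (hρ : 0 ≤ ρ) {G : E → ℝ}
    (hg : 0 ≤ g) (ha0 : 0 ≤ a)
    {Θ : E → W} (h0 : ∀ t, ρ < ‖x - t‖ → Θ t = 0) (ha : ∀ t, ‖Θ t‖ ≤ a)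
    (hG : ∀ t, ‖x - t‖ ≤ ρ → |G t| ≤ g) :
    ∫ t, ‖G t • Θ t‖ ≤ a * (g * (ρ ^ finrank ℝ E * volume.real (closedBall (0 : E) 1))) := by
  refine (integral_norm_smul_le (g := fun _ => g) continuous_const h0 ha hG).trans ?_
  exact mul_le_mul_of_nonneg_left (setIntegral_le_volume hρ measurableSet_closedBall subset_rfl
    continuous_const hg fun _ _ => le_rfl) ha0

/-- The mass `∫ ⟨t⟩⁻ᵏ dt` of the weight over the ball of radius `ρ` about `x`. -/
noncomputable def mass (k : ℝ) (x : E) (ρ : ℝ) : ℝ := ∫ t in closedBall x ρ, bracket t ^ (-k)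

lemma mass_mono (k : ℝ) {x y : E} {ρ σ : ℝ} (h : closedBall x ρ ⊆ closedBall y σ) :
    mass k x ρ ≤ mass k y σ := by
  apply setIntegral_mono_set
  · exact (continuous_bracket_rpow (-k)).continuousOn.integrableOn_compact
      (isCompact_closedBall y σ)
  · exact Filter.Eventually.of_forall fun t => Real.rpow_nonneg (bracket_pos t).le _
  · exact h.eventuallyLE

lemma mass_nonneg (k : ℝ) (x : E) (ρ : ℝ) : 0 ≤ mass k x ρ :=
  integral_nonneg fun t => Real.rpow_nonneg (bracket_pos t).le _

lemma mass_near {k : ℝ} (hk : 0 ≤ k) {x : E} {ρ : ℝ} (hρ : 0 ≤ ρ) (h : 2 * ρ ≤ bracket x) :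
    mass k x ρ ≤
      2 ^ k * bracket x ^ (-k) * (ρ ^ finrank ℝ E * volume.real (closedBall (0 : E) 1)) := by
  apply setIntegral_le_volume hρ measurableSet_closedBall subset_rfl (continuous_bracket_rpow _)
  · have := bracket_pos x
    positivity
  · intro t ht
    rw [mem_closedBall, dist_comm, dist_eq_norm] at ht
    apply bracket_rpow_neg_le hk
    linarith [bracket_le_add x t]

/-- Mass of a centred dyadic ball, shell by shell. Since `k ≤ dim E`, all `m + 1`
shells obey the bound for the outermost one; for `k = dim E` the factor `m + 1` is the
logarithm in the final estimate. -/
lemma mass_zero {k : ℝ} (hk : 0 ≤ k) (hkd : k ≤ finrank ℝ E) (m : ℕ) :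
    mass k (0 : E) (2 ^ m) ≤ 2 ^ k * volume.real (closedBall (0 : E) 1) *
      (((2 : ℝ) ^ m) ^ ((finrank ℝ E : ℝ) - k) * (m + 1)) := by
  have hω : 0 ≤ volume.real (closedBall (0 : E) 1) := measureReal_nonneg
  have h2k : (1 : ℝ) ≤ 2 ^ k := Real.one_le_rpow (by norm_num) hk
  induction m with
  | zero =>
    have := setIntegral_le_volume (x := (0 : E)) (ρ := 1) (g := 1) (by norm_num)
      measurableSet_closedBall subset_rfl (continuous_bracket_rpow (-k)) (by norm_num) (by
        intro t _
        apply Real.rpow_le_one_of_one_le_of_nonpos (one_le_bracket t) (by linarith))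
    simp only [pow_zero, mass, Real.one_rpow, one_pow, one_mul, Nat.cast_zero, zero_add,
      mul_one] at this ⊢
    nlinarith
  | succ m ih =>
    set D : ℝ := (finrank ℝ E : ℝ)
    set ω := volume.real (closedBall (0 : E) 1)
    have hR : (0 : ℝ) < 2 ^ m := by positivity
    have hsub : closedBall (0 : E) (2 ^ m) ⊆ closedBall 0 (2 ^ (m + 1)) :=
      closedBall_subset_closedBall (pow_le_pow_right₀ (by norm_num) (Nat.le_succ m))
    have hintegrable : IntegrableOn (fun t : E => bracket t ^ (-k)) (closedBall 0 (2 ^ (m + 1))) :=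
      (continuous_bracket_rpow (-k)).continuousOn.integrableOn_compact (isCompact_closedBall _ _)
    have hsplit : mass k (0 : E) (2 ^ (m + 1)) = mass k (0 : E) (2 ^ m) +
        ∫ t in closedBall (0 : E) (2 ^ (m + 1)) \ closedBall 0 (2 ^ m), bracket t ^ (-k) := by
      unfold mass
      rw [setIntegral_sdiff measurableSet_closedBall hintegrable hsub]
      ring
    have hshell : ∫ t in closedBall (0 : E) (2 ^ (m + 1)) \ closedBall 0 (2 ^ m),
        bracket t ^ (-k) ≤ ((2 : ℝ) ^ m) ^ (-k) * ((2 ^ (m + 1)) ^ finrank ℝ E * ω) := by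
      apply setIntegral_le_volume (by positivity)
        (measurableSet_closedBall.diff measurableSet_closedBall) Set.sdiff_subset
        (continuous_bracket_rpow _) (by positivity)
      intro t ht
      have : (2 : ℝ) ^ m ≤ bracket t := by
        have h1 := ht.2
        rw [mem_closedBall_zero_iff, not_le] at h1
        exact h1.le.trans (norm_le_bracket t)
      exact Real.rpow_le_rpow_of_nonpos hR this (by linarith)
    have e1 : ((2 : ℝ) ^ m) ^ (-k) * ((2 ^ (m + 1)) ^ finrank ℝ E * ω) =
        2 ^ k * ω * ((2 : ℝ) ^ (m + 1)) ^ (D - k) := by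
      rw [Real.rpow_sub (by positivity), Real.rpow_natCast, Real.rpow_neg hR.le, pow_succ (2 : ℝ) m,
        Real.mul_rpow (x := (2 : ℝ) ^ m) (y := 2) hR.le (by norm_num)]
      have : 0 < ((2 : ℝ) ^ m) ^ k := by positivity
      field_simp
    have e2 : ((2 : ℝ) ^ m) ^ (D - k) ≤ ((2 : ℝ) ^ (m + 1)) ^ (D - k) :=
      Real.rpow_le_rpow hR.le (pow_le_pow_right₀ (by norm_num) (Nat.le_succ m)) (by linarith)
    rw [e1] at hshell
    have e3 : 2 ^ k * ω * (((2 : ℝ) ^ m) ^ (D - k) * (m + 1)) ≤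
        2 ^ k * ω * (((2 : ℝ) ^ (m + 1)) ^ (D - k) * (m + 1)) := by gcongr
    rw [hsplit]
    push_cast
    nlinarith

/-- Mean of the weight over a ball of radius `R = 2^m`, uniformly in the centre: it is `O(R⁻ᵏ)` up
to a logarithm. If `2R ≤ ⟨x⟩` the weight is comparable with `⟨x⟩⁻ᵏ` on the ball; otherwise the ball
sits inside the centred ball of radius `4R`. -/
lemma mass_far {k : ℝ} (hk : 0 ≤ k) (hkd : k ≤ finrank ℝ E) : ∃ C : ℝ, 0 < C ∧
    ∀ (x : E) (m : ℕ),
      mass k x (2 ^ m) / ((2 : ℝ) ^ m) ^ finrank ℝ E ≤ C * (((2 : ℝ) ^ m) ^ (-k) * (m + 1)) := by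
  set d := finrank ℝ E
  set ω := volume.real (closedBall (0 : E) 1)
  have hω : 0 ≤ ω := measureReal_nonneg
  refine ⟨2 ^ k * ω + 2 ^ k * ω * (4 ^ ((d : ℝ) - k) * 3) + 1, by positivity, fun x m => ?_⟩
  have hR : (0 : ℝ) < 2 ^ m := by positivity
  have hm : (1 : ℝ) ≤ m + 1 := by linarith [Nat.cast_nonneg (α := ℝ) m]
  have hP : 0 < ((2 : ℝ) ^ m) ^ (-k) := by positivity
  rw [div_le_iff₀ (by positivity)]
  rcases le_or_gt (2 * (2 : ℝ) ^ m) (bracket x) with h | h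
  · have h1 := mass_near hk hR.le h
    have h2 : bracket x ^ (-k) ≤ ((2 : ℝ) ^ m) ^ (-k) :=
      Real.rpow_le_rpow_of_nonpos hR (by linarith) (by linarith)
    calc mass k x (2 ^ m) ≤ 2 ^ k * bracket x ^ (-k) * ((2 ^ m) ^ d * ω) := h1
      _ ≤ 2 ^ k * (((2 : ℝ) ^ m) ^ (-k) * (m + 1)) * ((2 ^ m) ^ d * ω) := by
        gcongr
        nlinarith
      _ = (2 ^ k * ω) * (((2 : ℝ) ^ m) ^ (-k) * (m + 1)) * (2 ^ m) ^ d := by ring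
      _ ≤ _ := by
        gcongr
        have : 0 ≤ 2 ^ k * ω * (4 ^ ((d : ℝ) - k) * 3) := by positivity
        linarith
  · have hsub : closedBall x (2 ^ m) ⊆ closedBall (0 : E) (2 ^ (m + 2)) := by
      apply closedBall_subset_closedBall'
      rw [dist_zero_right]
      have := norm_le_bracket x
      rw [pow_add]
      linarith
    have h1 := (mass_mono k hsub).trans (mass_zero hk hkd (m + 2))
    have e1 : ((2 : ℝ) ^ (m + 2)) ^ ((d : ℝ) - k) =
        4 ^ ((d : ℝ) - k) * ((((2 : ℝ) ^ m) ^ d) * ((2 : ℝ) ^ m) ^ (-k)) := by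
      rw [pow_add, Real.mul_rpow hR.le (by norm_num), mul_comm]
      congr 1
      · norm_num
      · rw [sub_eq_add_neg, Real.rpow_add hR, Real.rpow_natCast]
    rw [e1] at h1
    push_cast at h1
    calc mass k x (2 ^ m) ≤ _ := h1
      _ ≤ 2 ^ k * ω * (4 ^ ((d : ℝ) - k) * ((((2 : ℝ) ^ m) ^ d) * ((2 : ℝ) ^ m) ^ (-k)) *
          (3 * (m + 1))) := by
        gcongr
        linarith
      _ = (2 ^ k * ω * (4 ^ ((d : ℝ) - k) * 3)) * (((2 : ℝ) ^ m) ^ (-k) * (m + 1)) *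
          (2 ^ m) ^ d := by ring
      _ ≤ _ := by
        gcongr
        have : 0 ≤ 2 ^ k * ω := by positivity
        linarith

/-- Summing the normalised masses over dyadic balls: the scales below `⟨x⟩` contribute
`⟨x⟩⁻ᵏ` each, and those above decay geometrically. -/
lemma sum_mass_le {k : ℝ} (hk : 2 < k) (hkd : k ≤ finrank ℝ E) : ∃ C : ℝ, 0 < C ∧
    ∀ (x : E) (J : ℕ),
      ∑ m ∈ Finset.range J, mass k x (2 ^ m) / ((2 : ℝ) ^ m) ^ finrank ℝ E ≤
        C * (Real.log (4 * bracket x) * bracket x ^ (-k)) := by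
  have hk0 : 0 ≤ k := by linarith
  obtain ⟨C, hC, hfar⟩ := mass_far (E := E) hk0 hkd
  set d := finrank ℝ E
  set ω := volume.real (closedBall (0 : E) 1)
  have hω : 0 ≤ ω := measureReal_nonneg
  have hlog2 : 0 < Real.log 2 := Real.log_pos (by norm_num)
  refine ⟨(2 ^ k * ω + C * (2 ^ k * 2)) / Real.log 2, by positivity, fun x J => ?_⟩
  have hx := bracket_pos x
  set b := bracket x
  have hbk : 0 < b ^ (-k) := by positivity
  obtain ⟨N, hN1, hN2⟩ := exists_nat_pow_near (one_le_bracket x) (one_lt_two (α := ℝ))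
  have hNlog : ((N : ℝ) + 1) * Real.log 2 ≤ Real.log (4 * b) := by
    have : ((N : ℝ) + 1) * Real.log 2 = Real.log (2 ^ (N + 1)) := by
      rw [Real.log_pow]; push_cast; ring
    rw [this]
    apply Real.log_le_log (by positivity)
    rw [pow_succ]
    linarith
  have hNk : ((2 : ℝ) ^ N) ^ (-k) ≤ 2 ^ k * b ^ (-k) := by
    have h2 : (2 : ℝ) ^ N * 2 = 2 ^ (N + 1) := by rw [pow_succ]
    have : ((2 : ℝ) ^ (N + 1)) ^ (-k) ≤ b ^ (-k) :=
      Real.rpow_le_rpow_of_nonpos hx hN2.le (by linarith)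
    have h3 : ((2 : ℝ) ^ (N + 1)) ^ (-k) = ((2 : ℝ) ^ N) ^ (-k) * 2 ^ (-k) := by
      rw [← h2, Real.mul_rpow (by positivity) (by norm_num)]
    rw [h3] at this
    have h4 : (2 : ℝ) ^ (-k) * 2 ^ k = 1 := by
      rw [← Real.rpow_add (by norm_num)]; simp
    calc ((2 : ℝ) ^ N) ^ (-k) = 2 ^ k * (((2 : ℝ) ^ N) ^ (-k) * 2 ^ (-k)) := by
          rw [mul_comm ((2 : ℝ) ^ k), mul_assoc, h4, mul_one]
      _ ≤ _ := by gcongr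
  have hT : ∀ m : ℕ, 0 ≤ mass k x (2 ^ m) / ((2 : ℝ) ^ m) ^ d := fun m =>
    div_nonneg (mass_nonneg _ _ _) (by positivity)
  calc ∑ m ∈ Finset.range J, mass k x (2 ^ m) / ((2 : ℝ) ^ m) ^ d
      ≤ ∑ m ∈ Finset.range (N + J), mass k x (2 ^ m) / ((2 : ℝ) ^ m) ^ d := by
        apply Finset.sum_le_sum_of_subset_of_nonneg
        · exact Finset.range_mono (Nat.le_add_left _ _)
        · intro m _ _; exact hT m
    _ = ∑ m ∈ Finset.range N, mass k x (2 ^ m) / ((2 : ℝ) ^ m) ^ d +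
        ∑ l ∈ Finset.range J, mass k x (2 ^ (N + l)) / ((2 : ℝ) ^ (N + l)) ^ d :=
        Finset.sum_range_add _ _ _
    _ ≤ ∑ m ∈ Finset.range N, 2 ^ k * ω * b ^ (-k) +
        ∑ l ∈ Finset.range J, C * (((N : ℝ) + 1) * (2 ^ k * b ^ (-k))) * (1 / 2) ^ l := by
        gcongr with m hm l hl
        · rw [Finset.mem_range] at hm
          rw [div_le_iff₀ (by positivity)]
          refine (mass_near hk0 (by positivity) ?_).trans (le_of_eq (by ring))
          have : (2 : ℝ) * 2 ^ m = 2 ^ (m + 1) := by rw [pow_succ]; ring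
          rw [this]
          exact (pow_le_pow_right₀ (by norm_num) hm).trans hN1
        · refine (hfar x (N + l)).trans ?_
          rw [mul_assoc C]
          refine mul_le_mul_of_nonneg_left ?_ hC.le
          have e1 : ((2 : ℝ) ^ (N + l)) ^ (-k) = ((2 : ℝ) ^ N) ^ (-k) * ((2 : ℝ) ^ l) ^ (-k) := by
            rw [pow_add, Real.mul_rpow (by positivity) (by positivity)]
          have e2 : ((2 : ℝ) ^ l) ^ (-k) ≤ ((2 : ℝ) ^ l) ^ (-2 : ℝ) :=
            Real.rpow_le_rpow_of_exponent_le (one_le_pow₀ (by norm_num)) (by linarith)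
          have e3 : ((2 : ℝ) ^ l) ^ (-2 : ℝ) = (1 / 2) ^ l * (1 / 2) ^ l := by
            rw [Real.rpow_neg (by positivity), one_div, inv_pow, ← mul_inv]
            norm_num [sq]
          have e4 : ((N + l : ℕ) : ℝ) + 1 ≤ (N + 1) * 2 ^ l := by
            have h1 : (l : ℝ) + 1 ≤ 2 ^ l := by
              exact_mod_cast Nat.succ_le_of_lt (Nat.lt_two_pow_self (n := l))
            have h2 := Nat.cast_nonneg (α := ℝ) N
            have h3 := Nat.cast_nonneg (α := ℝ) l
            push_cast
            nlinarith
          have e5 : (2 : ℝ) ^ l * (1 / 2) ^ l = 1 := by rw [← mul_pow]; norm_num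
          rw [e1]
          calc ((2 : ℝ) ^ N) ^ (-k) * ((2 : ℝ) ^ l) ^ (-k) * (((N + l : ℕ) : ℝ) + 1)
              ≤ (2 ^ k * b ^ (-k)) * ((1 / 2) ^ l * (1 / 2) ^ l) * ((N + 1) * 2 ^ l) := by
                rw [e3] at e2
                gcongr
            _ = (2 ^ k * b ^ (-k)) * (1 / 2) ^ l * (N + 1) * (2 ^ l * (1 / 2) ^ l) := by ring
            _ = _ := by rw [e5]; ring
    _ ≤ N * (2 ^ k * ω * b ^ (-k)) + C * (((N : ℝ) + 1) * (2 ^ k * b ^ (-k))) * 2 := by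
        rw [Finset.sum_const, Finset.card_range, nsmul_eq_mul, ← Finset.mul_sum]
        gcongr
        have := Summable.sum_le_tsum (Finset.range J) (fun i _ => by positivity)
          summable_geometric_two
        rwa [tsum_geometric_two] at this
    _ ≤ (N + 1) * (2 ^ k * ω * b ^ (-k)) + C * (((N : ℝ) + 1) * (2 ^ k * b ^ (-k))) * 2 := by
        gcongr
        linarith
    _ = (2 ^ k * ω + C * (2 ^ k * 2)) / Real.log 2 * (((N + 1) * Real.log 2) * b ^ (-k)) := by
        field_simp
    _ ≤ _ := by gcongr

end Mass

/-! ### Geometric sums over scales -/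

section Series

lemma norm_tsum_le_of_sum_range_le {W : Type*} [NormedAddCommGroup W] {f : ℕ → W} {K : ℝ}
    (h : ∀ J, ∑ j ∈ Finset.range J, ‖f j‖ ≤ K) : ‖∑' j, f j‖ ≤ K := by
  have hs : Summable fun j => ‖f j‖ := summable_of_sum_range_le (fun j => norm_nonneg _) h
  exact (norm_tsum_le_tsum_norm hs).trans
    (Real.tsum_le_of_sum_range_le (fun j => norm_nonneg _) h)

lemma rpow_inv_two_pow (α : ℝ) (j : ℕ) :
    (((2 : ℝ) ^ j)⁻¹) ^ α = ((1 / 2 : ℝ) ^ α) ^ j := by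
  rw [← inv_pow, ← Real.rpow_natCast, ← Real.rpow_natCast, ← Real.rpow_mul (by norm_num),
    ← Real.rpow_mul (by norm_num), mul_comm, one_div]

lemma half_rpow_lt_one {α : ℝ} (hα : 0 < α) : (1 / 2 : ℝ) ^ α < 1 :=
  Real.rpow_lt_one (by norm_num) (by norm_num) hα

lemma sum_range_geometric_le {q : ℝ} (h0 : 0 ≤ q) (h1 : q < 1) (J : ℕ) :
    ∑ j ∈ Finset.range J, q ^ j ≤ (1 - q)⁻¹ := by
  rw [← tsum_geometric_of_lt_one h0 h1]
  exact Summable.sum_le_tsum _ (fun i _ => by positivity) (summable_geometric_of_lt_one h0 h1)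

lemma sum_small_le {α : ℝ} (hα : 0 < α) (J : ℕ) :
    ∑ j ∈ Finset.range J, (((2 : ℝ) ^ (j + 1))⁻¹) ^ α ≤ (1 - (1 / 2 : ℝ) ^ α)⁻¹ := by
  have h0 : (0 : ℝ) ≤ (1 / 2 : ℝ) ^ α := by positivity
  refine le_trans ?_ (sum_range_geometric_le h0 (half_rpow_lt_one hα) J)
  gcongr with j hj
  rw [rpow_inv_two_pow]
  exact pow_le_pow_of_le_one h0 (half_rpow_lt_one hα).le (Nat.le_succ j)

lemma summable_small {α : ℝ} (hα : 0 < α) :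
    Summable fun j : ℕ => (((2 : ℝ) ^ (j + 1))⁻¹) ^ α :=
  summable_of_sum_range_le (fun j => by positivity) (sum_small_le hα)

lemma summable_large {k : ℝ} (hk : 2 < k) :
    Summable fun j : ℕ => ((2 : ℝ) ^ j) ^ 2 * (((2 : ℝ) ^ j) ^ (-k) * (j + 1)) := by
  have hq0 : (0 : ℝ) ≤ (1 / 2 : ℝ) ^ (k - 2) := by positivity
  have hq : ‖(1 / 2 : ℝ) ^ (k - 2)‖ < 1 := by
    rw [Real.norm_of_nonneg hq0]; exact half_rpow_lt_one (by linarith)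
  have h1 := summable_pow_mul_geometric_of_norm_lt_one 1 hq
  have h2 := summable_geometric_of_norm_lt_one hq
  refine (h1.add h2).congr fun j => ?_
  rw [← rpow_inv_two_pow, Real.rpow_sub (by positivity), Real.inv_rpow (by positivity),
    Real.inv_rpow (by positivity), Real.rpow_neg (by positivity)]
  norm_num
  field_simp

/-- The two geometric regimes of the Hölder estimate, scales `r < h` and `r ≥ h`. -/
lemma sum_small_min_le {α : ℝ} (hα : 0 < α) (hα1 : α < 1) : ∃ C : ℝ, 0 < C ∧
    ∀ (h : ℝ), 0 < h → h ≤ 1 → ∀ J : ℕ,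
      ∑ j ∈ Finset.range J, (((2 : ℝ) ^ (j + 1))⁻¹) ^ α * min 1 (h / ((2 : ℝ) ^ (j + 1))⁻¹) ≤
        C * h ^ α := by
  set q := (1 / 2 : ℝ) ^ α with hq
  set p := (1 / 2 : ℝ) ^ (1 - α) with hp
  have hq0 : 0 ≤ q := by positivity
  have hp0 : 0 ≤ p := by positivity
  have hq1 : q < 1 := half_rpow_lt_one hα
  have hp1 : p < 1 := half_rpow_lt_one (by linarith)
  have hq2 : 0 < (1 - q)⁻¹ := inv_pos.2 (by linarith)
  have hp2 : 0 < (1 - p)⁻¹ := inv_pos.2 (by linarith)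
  refine ⟨(1 - p)⁻¹ + (1 - q)⁻¹, by linarith, fun h h0 h1 J => ?_⟩
  obtain ⟨N, hN1, hN2⟩ := exists_nat_pow_near_of_lt_one h0 h1 (show (0 : ℝ) < 1 / 2 by norm_num)
    (by norm_num)
  have hnn : ∀ j : ℕ,
      0 ≤ (((2 : ℝ) ^ (j + 1))⁻¹) ^ α * min 1 (h / ((2 : ℝ) ^ (j + 1))⁻¹) := fun j => by
    have : 0 ≤ min 1 (h / ((2 : ℝ) ^ (j + 1))⁻¹) := le_min zero_le_one (by positivity)
    positivity
  have hh : 0 < h ^ α := by positivity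
  calc _ ≤ ∑ j ∈ Finset.range (N + J),
        (((2 : ℝ) ^ (j + 1))⁻¹) ^ α * min 1 (h / ((2 : ℝ) ^ (j + 1))⁻¹) :=
        Finset.sum_le_sum_of_subset_of_nonneg (Finset.range_mono (Nat.le_add_left _ _))
          fun j _ _ => hnn j
    _ = _ := Finset.sum_range_add _ _ _
    _ ≤ ∑ j ∈ Finset.range N, h ^ α * p ^ (N - 1 - j) + ∑ l ∈ Finset.range J, h ^ α * q ^ l := by
        refine add_le_add (Finset.sum_le_sum fun j hj => ?_) (Finset.sum_le_sum fun l hl => ?_)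
        · rw [Finset.mem_range] at hj
          have hr : (0 : ℝ) < ((2 : ℝ) ^ (j + 1))⁻¹ := by positivity
          have e1 : h / ((2 : ℝ) ^ (j + 1))⁻¹ ≤ ((2 : ℝ) ^ (N - 1 - j))⁻¹ := by
            rw [div_le_iff₀ hr]
            refine hN2.trans (le_of_eq ?_)
            rw [← mul_inv, ← pow_add, one_div, inv_pow]
            congr 2
            omega
          have e2 : (((2 : ℝ) ^ (j + 1))⁻¹) ^ α * (h / ((2 : ℝ) ^ (j + 1))⁻¹) =
              h ^ α * (h / ((2 : ℝ) ^ (j + 1))⁻¹) ^ (1 - α) := by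
            set r := ((2 : ℝ) ^ (j + 1))⁻¹
            rw [Real.div_rpow h0.le hr.le, Real.rpow_sub h0, Real.rpow_sub hr, Real.rpow_one,
              Real.rpow_one]
            have : 0 < r ^ α := by positivity
            field_simp
          calc _ ≤ (((2 : ℝ) ^ (j + 1))⁻¹) ^ α * (h / ((2 : ℝ) ^ (j + 1))⁻¹) := by
                gcongr; exact min_le_right _ _
            _ = h ^ α * (h / ((2 : ℝ) ^ (j + 1))⁻¹) ^ (1 - α) := e2
            _ ≤ h ^ α * (((2 : ℝ) ^ (N - 1 - j))⁻¹) ^ (1 - α) := by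
                gcongr
            _ = _ := by rw [rpow_inv_two_pow]
        · calc _ ≤ (((2 : ℝ) ^ (N + l + 1))⁻¹) ^ α * 1 := by gcongr; exact min_le_left _ _
            _ = (((2 : ℝ) ^ (N + 1))⁻¹) ^ α * q ^ l := by
              rw [mul_one, rpow_inv_two_pow, rpow_inv_two_pow, ← pow_add]
              congr 1; omega
            _ ≤ _ := by
              gcongr
              rw [← inv_pow, ← one_div]
              exact hN1.le
    _ = h ^ α * ∑ j ∈ Finset.range N, p ^ j + h ^ α * ∑ l ∈ Finset.range J, q ^ l := by
        rw [← Finset.mul_sum, ← Finset.mul_sum, Finset.sum_range_reflect (fun j => p ^ j) N]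
    _ ≤ h ^ α * (1 - p)⁻¹ + h ^ α * (1 - q)⁻¹ := by
        gcongr
        · exact sum_range_geometric_le hp0 hp1 N
        · exact sum_range_geometric_le hq0 hq1 J
    _ = _ := by ring

end Series

/-! ### Estimates at a single scale -/

section Pieces

variable {E : Type*} [NormedAddCommGroup E] [InnerProductSpace ℝ E] [FiniteDimensional ℝ E]
  [MeasureSpace E] [BorelSpace E] [(volume : Measure E).IsAddHaarMeasure]
variable {W : Type*} [NormedAddCommGroup W] [NormedSpace ℝ W]

/-- The source conditions in usable form: `B ≥ 0`, continuity, `|F| ≤ B⟨x⟩⁻ᵏ`, and the local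
`α`-Hölder bound with the same weight. -/
structure IsSource (k α B : ℝ) (F : E → ℝ) : Prop where
  nonneg : 0 ≤ B
  cont : Continuous F
  bound : ∀ x, |F x| ≤ B * bracket x ^ (-k)
  holder : ∀ x t, ‖x - t‖ ≤ 1 → |F t - F x| ≤ B * bracket x ^ (-k) * ‖x - t‖ ^ α

/-- The convolution `F * φ` of a scalar source with a vector-valued kernel. -/
noncomputable def conv (F : E → ℝ) (φ : E → W) (x : E) : W := ∫ t, F t • φ (x - t)

lemma integrable_conv {F : E → ℝ} (hF : Continuous F) {φ : E → W} (hφ : Continuous φ)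
    (hc : HasCompactSupport φ) (x : E) : Integrable fun t => F t • φ (x - t) := by
  apply Continuous.integrable_of_hasCompactSupport
  · fun_prop
  · exact (hc.comp_homeomorph (Homeomorph.subLeft x)).smul_left

/-- The hypotheses under which a profile `φ` produces good pieces: continuous, supported in the
unit ball, bounded by `A`. -/
structure IsProfile (A : ℝ) (φ : E → W) : Prop where
  cont : Continuous φ
  supp : ∀ z, 1 < ‖z‖ → φ z = 0
  bound : ∀ z, ‖φ z‖ ≤ A

namespace IsProfile

variable {A : ℝ} {φ : E → W}

lemma nonneg (hφ : IsProfile A φ) : 0 ≤ A := (norm_nonneg _).trans (hφ.bound 0)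

lemma continuous_dil (hφ : IsProfile A φ) (c r : ℝ) : Continuous (dil c r φ) := by
  have := hφ.cont
  unfold dil
  fun_prop

lemma hasCompactSupport_dil (hφ : IsProfile A φ) (c : ℝ) {r : ℝ} (hr : 0 < r) :
    HasCompactSupport (dil c r φ) :=
  hasCompactSupport_of_norm fun _ hz => dil_eq_zero hr hφ.supp hz

lemma integrable (hφ : IsProfile A φ) (c : ℝ) {r : ℝ} (hr : 0 < r) {F : E → ℝ}
    (hF : Continuous F) (x : E) : Integrable fun t => F t • dil c r φ (x - t) :=
  integrable_conv hF (hφ.continuous_dil c r) (hφ.hasCompactSupport_dil c hr) x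

lemma norm_dil_le (hφ : IsProfile A φ) (c r : ℝ) (z : E) : ‖dil c r φ z‖ ≤ |c| * A := by
  unfold dil
  rw [norm_smul, Real.norm_eq_abs]
  exact mul_le_mul_of_nonneg_left (hφ.bound _) (abs_nonneg c)

lemma small_le (hφ : IsProfile A φ) {k α B : ℝ} (hk : 0 ≤ k) {F : E → ℝ}
    (hF : IsSource k α B F) (c : ℝ) {r : ℝ} (hr : 0 < r) (x : E) :
    ∫ t, ‖F t • dil c r φ (x - t)‖ ≤
      |c| * A * (B * (r ^ finrank ℝ E * volume.real (closedBall (0 : E) 1))) := by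
  apply integral_norm_smul_le_const hr.le hF.nonneg (mul_nonneg (abs_nonneg c) hφ.nonneg)
  · exact fun t ht => dil_eq_zero hr hφ.supp ht
  · exact fun t => hφ.norm_dil_le c r _
  · intro t _
    refine (hF.bound t).trans (mul_le_of_le_one_right hF.nonneg ?_)
    exact Real.rpow_le_one_of_one_le_of_nonpos (one_le_bracket t) (by linarith)

lemma large_le (hφ : IsProfile A φ) {k α B : ℝ} {F : E → ℝ}
    (hF : IsSource k α B F) (c : ℝ) {r : ℝ} (hr : 0 < r) (x : E) :
    ∫ t, ‖F t • dil c r φ (x - t)‖ ≤ |c| * A * (B * mass k x r) := by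
  unfold mass
  rw [← integral_const_mul]
  apply integral_norm_smul_le
  · exact continuous_const.mul (continuous_bracket_rpow _)
  · exact fun t ht => dil_eq_zero hr hφ.supp ht
  · exact fun t => hφ.norm_dil_le c r _
  · intro t _
    exact hF.bound t

/-- For a mean-zero kernel the constant `F x` can be subtracted from the source. -/
lemma cancel_le (hφ : IsProfile A φ) {k α B : ℝ} (hα : 0 ≤ α) {F : E → ℝ}
    (hF : IsSource k α B F) (c : ℝ) {r : ℝ} (hr : 0 < r) (hr1 : r ≤ 1) (x : E)
    (h0 : ∫ t, dil c r φ (x - t) = 0) :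
    ‖conv F (dil c r φ) x‖ ≤ |c| * A * (B * bracket x ^ (-k) * r ^ α *
      (r ^ finrank ℝ E * volume.real (closedBall (0 : E) 1))) := by
  have hb := bracket_pos x
  have hB := hF.nonneg
  have e : conv F (dil c r φ) x = ∫ t, (F t - F x) • dil c r φ (x - t) := by
    simp_rw [sub_smul]
    rw [integral_sub (hφ.integrable c hr hF.cont x)
      (hφ.integrable c hr (continuous_const (y := F x)) x), integral_smul, h0, smul_zero, sub_zero]
    rfl
  rw [e]
  refine (norm_integral_le_integral_norm _).trans ?_
  apply integral_norm_smul_le_const hr.le (by positivity) (mul_nonneg (abs_nonneg c) hφ.nonneg)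
  · exact fun t ht => dil_eq_zero hr hφ.supp ht
  · exact fun t => hφ.norm_dil_le c r _
  · intro t ht
    refine (hF.holder x t (ht.trans hr1)).trans ?_
    gcongr

lemma norm_dil_sub_le (hφl : ∀ z w, ‖φ z - φ w‖ ≤ A * ‖z - w‖) (c : ℝ) {r : ℝ} (hr : 0 < r)
    (z w : E) : ‖dil c r φ z - dil c r φ w‖ ≤ |c| * A * (‖z - w‖ / r) := by
  unfold dil
  rw [← smul_sub, norm_smul, Real.norm_eq_abs, mul_assoc]
  refine mul_le_mul_of_nonneg_left ((hφl _ _).trans (le_of_eq ?_)) (abs_nonneg c)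
  rw [← smul_sub, norm_smul, norm_inv, Real.norm_of_nonneg hr.le]
  ring

lemma dil_sub_eq_zero (hφ : IsProfile A φ) (c : ℝ) {r : ℝ} (hr : 0 < r) {x y : E}
    (hxy : ‖y - x‖ ≤ r) (t : E) (ht : 2 * r < ‖x - t‖) :
    dil c r φ (y - t) - dil c r φ (x - t) = 0 := by
  rw [dil_eq_zero hr hφ.supp, dil_eq_zero hr hφ.supp, sub_zero]
  · linarith
  · have : ‖x - t‖ ≤ ‖y - x‖ + ‖y - t‖ := by
      calc ‖x - t‖ = ‖(y - t) - (y - x)‖ := by congr 1; abel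
        _ ≤ ‖y - t‖ + ‖y - x‖ := norm_sub_le _ _
        _ = _ := add_comm _ _
    linarith

lemma conv_sub (hφ : IsProfile A φ) (c : ℝ) {r : ℝ} (hr : 0 < r) {F : E → ℝ}
    (hF : Continuous F) (x y : E) : conv F (dil c r φ) y - conv F (dil c r φ) x =
      ∫ t, F t • (dil c r φ (y - t) - dil c r φ (x - t)) := by
  simp_rw [smul_sub]
  rw [integral_sub (hφ.integrable c hr hF y) (hφ.integrable c hr hF x)]
  rfl

lemma large_sub_le (hφ : IsProfile A φ) (hφl : ∀ z w, ‖φ z - φ w‖ ≤ A * ‖z - w‖)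
    {k α B : ℝ} {F : E → ℝ} (hF : IsSource k α B F) (c : ℝ) {r : ℝ} (hr : 0 < r) {x y : E}
    (hxy : ‖y - x‖ ≤ r) :
    ‖conv F (dil c r φ) y - conv F (dil c r φ) x‖ ≤
      |c| * A * (‖y - x‖ / r) * (B * mass k x (2 * r)) := by
  rw [hφ.conv_sub c hr hF.cont]
  refine (norm_integral_le_integral_norm _).trans ?_
  unfold mass
  rw [← integral_const_mul]
  apply integral_norm_smul_le
  · exact continuous_const.mul (continuous_bracket_rpow _)
  · exact hφ.dil_sub_eq_zero c hr hxy
  · intro t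
    refine (norm_dil_sub_le hφl c hr _ _).trans (le_of_eq ?_)
    simp
  · intro t _
    exact hF.bound t

/-- Increment of a small-scale piece with mean-zero kernel: the Lipschitz bound of the kernel gives
`‖y - x‖ / r` and subtracting `F x` gives `r ^ α`. -/
lemma small_sub_le (hφ : IsProfile A φ) (hφl : ∀ z w, ‖φ z - φ w‖ ≤ A * ‖z - w‖)
    {k α B : ℝ} (hα : 0 ≤ α) {F : E → ℝ} (hF : IsSource k α B F) (c : ℝ) {r : ℝ} (hr : 0 < r)
    (hr1 : 2 * r ≤ 1) (h0 : ∀ x, ∫ t, dil c r φ (x - t) = 0) {x y : E} (hxy : ‖y - x‖ ≤ r) :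
    ‖conv F (dil c r φ) y - conv F (dil c r φ) x‖ ≤
      |c| * A * (‖y - x‖ / r) * (B * bracket x ^ (-k) * (2 * r) ^ α *
        ((2 * r) ^ finrank ℝ E * volume.real (closedBall (0 : E) 1))) := by
  have hb := bracket_pos x
  have hB := hF.nonneg
  have hA := hφ.nonneg
  have hcst : Continuous fun _ : E => F x := continuous_const
  have e : conv F (dil c r φ) y - conv F (dil c r φ) x =
      ∫ t, (F t - F x) • (dil c r φ (y - t) - dil c r φ (x - t)) := by
    have e1 := hφ.conv_sub c hr (F := fun t => F t - F x) (hF.cont.sub hcst) x y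
    have e3 : ∀ z, conv (fun t => F t - F x) (dil c r φ) z = conv F (dil c r φ) z := by
      intro z
      unfold conv
      simp_rw [sub_smul]
      rw [integral_sub (hφ.integrable c hr hF.cont z) (hφ.integrable c hr hcst z),
        integral_smul, h0, smul_zero, sub_zero]
    rw [← e1, e3 y, e3 x]
  rw [e]
  refine (norm_integral_le_integral_norm _).trans ?_
  apply integral_norm_smul_le_const (by positivity) (by positivity) (by positivity)
  · exact hφ.dil_sub_eq_zero c hr hxy
  · intro t
    refine (norm_dil_sub_le hφl c hr _ _).trans (le_of_eq ?_)
    simp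
  · intro t ht
    refine (hF.holder x t (ht.trans hr1)).trans ?_
    gcongr

end IsProfile

end Pieces

/-! ### Sums over all scales -/

section Dyadic

variable {E : Type*} [NormedAddCommGroup E] [InnerProductSpace ℝ E] [FiniteDimensional ℝ E]
  [MeasureSpace E] [BorelSpace E] [(volume : Measure E).IsAddHaarMeasure]
variable {W : Type*} [NormedAddCommGroup W] [NormedSpace ℝ W]

/-- The `j`-th dyadic kernel `∑ r^(p - dim E) φ(z / r)`, the sum running over the small scale
`r = 2^(-j-1)` and the large scale `r = 2^j`. Pairing the two lets a single series over `ℕ`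
run through all dyadic scales. For `p = 2` it is a piece of the Newton kernel; each derivative
lowers `p` by one. -/
noncomputable def dyadicKer (p j : ℕ) (φ : E → W) (z : E) : W :=
  dil (((2 : ℝ) ^ (j + 1))⁻¹ ^ p / ((2 : ℝ) ^ (j + 1))⁻¹ ^ finrank ℝ E)
      ((2 : ℝ) ^ (j + 1))⁻¹ φ z +
    dil (((2 : ℝ) ^ j) ^ p / ((2 : ℝ) ^ j) ^ finrank ℝ E) ((2 : ℝ) ^ j) φ z

lemma contDiff_dyadicKer (p j : ℕ) {m : ℕ} {φ : E → W} (hφ : ContDiff ℝ m φ) :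
    ContDiff ℝ m (dyadicKer p j φ) :=
  (contDiff_dil _ _ hφ).add (contDiff_dil _ _ hφ)

lemma fderiv_dyadicKer (p j : ℕ) {φ : E → W} (hφ : ContDiff ℝ 1 φ) :
    fderiv ℝ (dyadicKer (p + 1) j φ) = dyadicKer p j (fderiv ℝ φ) := by
  have hd : ∀ c r : ℝ, Differentiable ℝ (dil c r φ) := fun c r =>
    (contDiff_dil (m := 1) c r hφ).differentiable (by norm_num)
  have hc : ∀ r : ℝ, 0 < r → r ^ (p + 1) / r ^ finrank ℝ E * r⁻¹ = r ^ p / r ^ finrank ℝ E := by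
    intro r hr
    field_simp
    ring
  funext z
  unfold dyadicKer
  rw [fderiv_fun_add (hd _ _ z) (hd _ _ z), fderiv_dil _ _ hφ, fderiv_dil _ _ hφ,
    hc _ (by positivity), hc _ (by positivity)]

lemma hasCompactSupport_dyadicKer (p j : ℕ) {A : ℝ} {φ : E → W} (hφ : IsProfile A φ) :
    HasCompactSupport (dyadicKer p j φ) :=
  (hφ.hasCompactSupport_dil _ (by positivity)).add (hφ.hasCompactSupport_dil _ (by positivity))

lemma conv_dyadicKer {F : E → ℝ} (hF : Continuous F) (p j : ℕ) {A : ℝ} {φ : E → W}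
    (hφ : IsProfile A φ) (x : E) : conv F (dyadicKer p j φ) x =
      conv F (dil (((2 : ℝ) ^ (j + 1))⁻¹ ^ p / ((2 : ℝ) ^ (j + 1))⁻¹ ^ finrank ℝ E)
        ((2 : ℝ) ^ (j + 1))⁻¹ φ) x +
      conv F (dil (((2 : ℝ) ^ j) ^ p / ((2 : ℝ) ^ j) ^ finrank ℝ E) ((2 : ℝ) ^ j) φ) x := by
  unfold dyadicKer
  simp only [conv]
  simp_rw [smul_add]
  exact integral_add (hφ.integrable _ (by positivity) hF x) (hφ.integrable _ (by positivity) hF x)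

lemma integral_dil_fderiv_eq_zero {A : ℝ} {φ : E → W} (hφ : IsProfile A φ)
    (hφ1 : ContDiff ℝ 1 φ) (c : ℝ) {r : ℝ} (hr : 0 < r) (x : E) :
    ∫ t, dil c r (fderiv ℝ φ) (x - t) = 0 := by
  have h := integral_fderiv_sub_eq_zero (contDiff_dil (m := 1) (c * r) r hφ1)
    (hφ.hasCompactSupport_dil (c * r) hr) x
  rwa [fderiv_dil _ _ hφ1, mul_assoc, mul_inv_cancel₀ hr.ne', mul_one] at h

lemma abs_coef (p d : ℕ) {r : ℝ} (hr : 0 < r) : |r ^ p / r ^ d| = r ^ p / r ^ d :=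
  abs_of_pos (by positivity)

lemma two_pow_inv_le_half (j : ℕ) : ((2 : ℝ) ^ (j + 1))⁻¹ ≤ 1 / 2 := by
  rw [one_div]
  apply inv_anti₀ (by norm_num)
  calc (2 : ℝ) = 2 ^ 1 := by norm_num
    _ ≤ 2 ^ (j + 1) := pow_le_pow_right₀ (by norm_num) (by omega)

/-- Uniform summable majorant of the large-scale pieces and their derivatives. -/
lemma large_uniform {k : ℝ} (hk : 2 < k) (hkd : k ≤ finrank ℝ E) {A : ℝ} {φ : E → W}
    (hφ : IsProfile A φ) :
    ∃ b : ℕ → ℝ, Summable b ∧ ∀ (α B : ℝ) (F : E → ℝ), IsSource k α B F →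
      ∀ p ≤ 2, ∀ j x, ∫ t, ‖F t • dil (((2 : ℝ) ^ j) ^ p / ((2 : ℝ) ^ j) ^ finrank ℝ E)
        ((2 : ℝ) ^ j) φ (x - t)‖ ≤ B * b j := by
  obtain ⟨C, hC, hfar⟩ := mass_far (E := E) (by linarith) hkd
  refine ⟨fun j => A * C * (((2 : ℝ) ^ j) ^ 2 * (((2 : ℝ) ^ j) ^ (-k) * (j + 1))),
    (summable_large hk).mul_left _, ?_⟩
  intro α B F hF p hp j x
  have hA := hφ.nonneg
  have hB := hF.nonneg
  have hr : (0 : ℝ) < 2 ^ j := by positivity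
  have hr1 : (1 : ℝ) ≤ 2 ^ j := one_le_pow₀ (by norm_num)
  refine (hφ.large_le hF _ hr x).trans ?_
  rw [abs_coef _ _ hr]
  have hm := mass_nonneg k x ((2 : ℝ) ^ j)
  calc ((2 : ℝ) ^ j) ^ p / ((2 : ℝ) ^ j) ^ finrank ℝ E * A * (B * mass k x (2 ^ j))
      = B * A * (((2 : ℝ) ^ j) ^ p * (mass k x (2 ^ j) / ((2 : ℝ) ^ j) ^ finrank ℝ E)) := by ring
    _ ≤ B * A * (((2 : ℝ) ^ j) ^ 2 * (C * (((2 : ℝ) ^ j) ^ (-k) * (j + 1)))) := by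
        gcongr
        exact hfar x j
    _ = _ := by ring

lemma small_uniform {k α B A : ℝ} (hk : 0 ≤ k) (hα1 : α ≤ 1) {F : E → ℝ}
    (hF : IsSource k α B F) {φ : E → W} (hφ : IsProfile A φ) (p : ℕ) (hp : 1 ≤ p) (j : ℕ) (x : E) :
    ∫ t, ‖F t • dil (((2 : ℝ) ^ (j + 1))⁻¹ ^ p / ((2 : ℝ) ^ (j + 1))⁻¹ ^ finrank ℝ E)
      ((2 : ℝ) ^ (j + 1))⁻¹ φ (x - t)‖ ≤
      B * (A * volume.real (closedBall (0 : E) 1) * ((2 : ℝ) ^ (j + 1))⁻¹ ^ α) := by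
  have hA := hφ.nonneg
  have hB := hF.nonneg
  have hr : (0 : ℝ) < ((2 : ℝ) ^ (j + 1))⁻¹ := by positivity
  have hr1 := two_pow_inv_le_half j
  refine (hφ.small_le hk hF _ hr x).trans ?_
  rw [abs_coef _ _ hr]
  set r := ((2 : ℝ) ^ (j + 1))⁻¹
  set ω := volume.real (closedBall (0 : E) 1)
  have hω : 0 ≤ ω := measureReal_nonneg
  have hpow : r ^ p ≤ r ^ α := by
    rw [← Real.rpow_natCast]
    apply Real.rpow_le_rpow_of_exponent_ge hr (by linarith)
    have : (1 : ℝ) ≤ p := by exact_mod_cast hp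
    linarith
  calc r ^ p / r ^ finrank ℝ E * A * (B * (r ^ finrank ℝ E * ω)) = B * (A * ω * r ^ p) := by
        field_simp
    _ ≤ _ := by gcongr

lemma small_second {k α B A : ℝ} (hα : 0 ≤ α) {F : E → ℝ}
    (hF : IsSource k α B F) {φ : E → W} (hφ : IsProfile A φ)
    (h0 : ∀ (c r : ℝ), 0 < r → ∀ x, ∫ t, dil c r φ (x - t) = 0) (j : ℕ) (x : E) :
    ‖conv F (dil (((2 : ℝ) ^ (j + 1))⁻¹ ^ 0 / ((2 : ℝ) ^ (j + 1))⁻¹ ^ finrank ℝ E)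
      ((2 : ℝ) ^ (j + 1))⁻¹ φ) x‖ ≤
      A * volume.real (closedBall (0 : E) 1) * (B * bracket x ^ (-k)) *
        ((2 : ℝ) ^ (j + 1))⁻¹ ^ α := by
  have hr : (0 : ℝ) < ((2 : ℝ) ^ (j + 1))⁻¹ := by positivity
  have hr1 := two_pow_inv_le_half j
  refine (hφ.cancel_le hα hF _ hr (by linarith) x (h0 _ _ hr x)).trans (le_of_eq ?_)
  rw [abs_coef _ _ hr]
  field_simp

/-- Increment of a small-scale piece. For `‖y - x‖` below the scale this is the increment estimate
of the kernel; otherwise the two values are bounded separately. -/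
lemma small_second_sub {k α B A : ℝ} (hk : 0 ≤ k) (hα : 0 ≤ α) {F : E → ℝ}
    (hF : IsSource k α B F) {φ : E → W} (hφ : IsProfile A φ)
    (hφl : ∀ z w, ‖φ z - φ w‖ ≤ A * ‖z - w‖)
    (h0 : ∀ (c r : ℝ), 0 < r → ∀ x, ∫ t, dil c r φ (x - t) = 0) (j : ℕ) {x y : E}
    (hxy : ‖y - x‖ ≤ 1) :
    ‖conv F (dil (((2 : ℝ) ^ (j + 1))⁻¹ ^ 0 / ((2 : ℝ) ^ (j + 1))⁻¹ ^ finrank ℝ E)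
        ((2 : ℝ) ^ (j + 1))⁻¹ φ) y -
      conv F (dil (((2 : ℝ) ^ (j + 1))⁻¹ ^ 0 / ((2 : ℝ) ^ (j + 1))⁻¹ ^ finrank ℝ E)
        ((2 : ℝ) ^ (j + 1))⁻¹ φ) x‖ ≤
      (2 ^ α * 2 ^ finrank ℝ E + 2 ^ k + 1) *
        (A * volume.real (closedBall (0 : E) 1) * (B * bracket x ^ (-k))) *
        (((2 : ℝ) ^ (j + 1))⁻¹ ^ α * min 1 (‖y - x‖ / ((2 : ℝ) ^ (j + 1))⁻¹)) := by
  have hr : (0 : ℝ) < ((2 : ℝ) ^ (j + 1))⁻¹ := by positivity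
  have hr1 := two_pow_inv_le_half j
  have hA := hφ.nonneg
  have hB := hF.nonneg
  have hω : 0 ≤ volume.real (closedBall (0 : E) 1) := measureReal_nonneg
  have hx := bracket_pos x
  rcases le_or_gt ‖y - x‖ ((2 : ℝ) ^ (j + 1))⁻¹ with h | h
  · rw [min_eq_right ((div_le_one hr).2 h)]
    refine (hφ.small_sub_le hφl hα hF _ hr (by linarith) (h0 _ _ hr) h).trans ?_
    rw [abs_coef _ _ hr]
    set r := ((2 : ℝ) ^ (j + 1))⁻¹
    set ω := volume.real (closedBall (0 : E) 1)
    rw [Real.mul_rpow (by norm_num) hr.le, mul_pow]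
    calc _ = 2 ^ α * 2 ^ finrank ℝ E * (A * ω * (B * bracket x ^ (-k))) *
          (r ^ α * (‖y - x‖ / r)) := by
          field_simp
      _ ≤ _ := by
          gcongr
          have : (0 : ℝ) ≤ 2 ^ k := by positivity
          linarith
  · rw [min_eq_left ((one_le_div hr).2 h.le), mul_one]
    refine (norm_sub_le _ _).trans ?_
    have h1 := small_second hα hF hφ h0 j x
    have h2 := small_second hα hF hφ h0 j y
    set r := ((2 : ℝ) ^ (j + 1))⁻¹
    set ω := volume.real (closedBall (0 : E) 1)
    have h3 : bracket y ^ (-k) ≤ 2 ^ k * bracket x ^ (-k) := by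
      apply bracket_rpow_neg_le hk
      have := bracket_le_add x y
      have := one_le_bracket y
      rw [norm_sub_rev] at hxy
      linarith
    have h4 : A * ω * (B * bracket y ^ (-k)) * r ^ α ≤
        A * ω * (B * (2 ^ k * bracket x ^ (-k))) * r ^ α := by gcongr
    calc _ ≤ A * ω * (B * (2 ^ k * bracket x ^ (-k))) * r ^ α +
          A * ω * (B * bracket x ^ (-k)) * r ^ α := add_le_add (h2.trans h4) h1
      _ = (2 ^ k + 1) * (A * ω * (B * bracket x ^ (-k))) * r ^ α := by ring
      _ ≤ _ := by
          gcongr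
          have : (0 : ℝ) ≤ 2 ^ α * 2 ^ finrank ℝ E := by positivity
          linarith

lemma one_le_log_four_bracket (x : E) : 1 ≤ Real.log (4 * bracket x) := by
  rw [Real.le_log_iff_exp_le (by have := bracket_pos x; positivity)]
  have := Real.exp_one_lt_d9
  have := one_le_bracket x
  linarith

/-- Size of the second derivative: `φ` plays the role of the second derivative of the profile,
whose dilates have mean zero. -/
lemma second_sum_le {k α A : ℝ} (hk : 2 < k) (hkd : k ≤ finrank ℝ E) (hα : 0 < α)
    {φ : E → W} (hφ : IsProfile A φ)
    (h0 : ∀ (c r : ℝ), 0 < r → ∀ x, ∫ t, dil c r φ (x - t) = 0) :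
    ∃ C : ℝ, 0 < C ∧ ∀ (B : ℝ) (F : E → ℝ), IsSource k α B F → ∀ (x : E) (J : ℕ),
      ∑ j ∈ Finset.range J, ‖conv F (dyadicKer 0 j φ) x‖ ≤
        C * B * (Real.log (4 * bracket x) * bracket x ^ (-k)) := by
  obtain ⟨C, hC, hsum⟩ := sum_mass_le (E := E) hk hkd
  have hA := hφ.nonneg
  set ω := volume.real (closedBall (0 : E) 1)
  have hω : 0 ≤ ω := measureReal_nonneg
  have hq : 0 < (1 - (1 / 2 : ℝ) ^ α)⁻¹ := inv_pos.2 (by linarith [half_rpow_lt_one hα])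
  refine ⟨A * ω * (1 - (1 / 2 : ℝ) ^ α)⁻¹ + A * C + 1, by positivity, fun B F hF x J => ?_⟩
  have hB := hF.nonneg
  have hx := bracket_pos x
  have hlog := one_le_log_four_bracket x
  calc _ ≤ ∑ j ∈ Finset.range J, (A * ω * (B * bracket x ^ (-k)) * ((2 : ℝ) ^ (j + 1))⁻¹ ^ α +
        A * B * (mass k x (2 ^ j) / ((2 : ℝ) ^ j) ^ finrank ℝ E)) := by
        refine Finset.sum_le_sum fun j _ => ?_
        rw [conv_dyadicKer hF.cont _ _ hφ]
        refine (norm_add_le _ _).trans (add_le_add (small_second hα.le hF hφ h0 j x) ?_)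
        have hr : (0 : ℝ) < 2 ^ j := by positivity
        refine (norm_integral_le_integral_norm _).trans ((hφ.large_le hF _ hr x).trans ?_)
        rw [abs_coef _ _ hr]
        exact le_of_eq (by ring)
    _ ≤ A * ω * (B * bracket x ^ (-k)) * (1 - (1 / 2 : ℝ) ^ α)⁻¹ +
        A * B * (C * (Real.log (4 * bracket x) * bracket x ^ (-k))) := by
        rw [Finset.sum_add_distrib, ← Finset.mul_sum, ← Finset.mul_sum]
        gcongr
        · exact sum_small_le hα J
        · exact hsum x J
    _ ≤ A * ω * (B * (Real.log (4 * bracket x) * bracket x ^ (-k))) * (1 - (1 / 2 : ℝ) ^ α)⁻¹ +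
        A * B * (C * (Real.log (4 * bracket x) * bracket x ^ (-k))) := by
        gcongr
        exact le_mul_of_one_le_left (by positivity) hlog
    _ = (A * ω * (1 - (1 / 2 : ℝ) ^ α)⁻¹ + A * C) * B *
          (Real.log (4 * bracket x) * bracket x ^ (-k)) := by ring
    _ ≤ _ := mul_le_mul_of_nonneg_right (mul_le_mul_of_nonneg_right (by linarith) hB)
        (by positivity)

/-- Hölder continuity of the second derivative, in the same setting. -/
lemma second_sub_sum_le {k α A : ℝ} (hk : 2 < k) (hkd : k ≤ finrank ℝ E) (hα : 0 < α)
    (hα1 : α < 1) {φ : E → W} (hφ : IsProfile A φ) (hφl : ∀ z w, ‖φ z - φ w‖ ≤ A * ‖z - w‖)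
    (h0 : ∀ (c r : ℝ), 0 < r → ∀ x, ∫ t, dil c r φ (x - t) = 0) :
    ∃ C : ℝ, 0 < C ∧ ∀ (B : ℝ) (F : E → ℝ), IsSource k α B F → ∀ (x y : E),
      0 < ‖y - x‖ → ‖y - x‖ ≤ 1 → ∀ J : ℕ,
      ∑ j ∈ Finset.range J, ‖conv F (dyadicKer 0 j φ) y - conv F (dyadicKer 0 j φ) x‖ ≤
        C * B * (Real.log (4 * bracket x) * bracket x ^ (-k)) * ‖y - x‖ ^ α := by
  obtain ⟨C, hC, hsum⟩ := sum_mass_le (E := E) hk hkd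
  obtain ⟨C', hC', hmin⟩ := sum_small_min_le hα hα1
  have hA := hφ.nonneg
  set ω := volume.real (closedBall (0 : E) 1) with hωdef
  set d := finrank ℝ E with hd
  have hω : 0 ≤ ω := measureReal_nonneg
  set c₀ : ℝ := 2 ^ α * 2 ^ d + 2 ^ k + 1 with hc₀
  have hc₀pos : 0 < c₀ := by positivity
  refine ⟨c₀ * (A * ω) * C' + A * 2 ^ d * C + 1, by positivity, fun B F hF x y hxy0 hxy J => ?_⟩
  have hB := hF.nonneg
  have hx := bracket_pos x
  have hlog := one_le_log_four_bracket x
  set h := ‖y - x‖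
  have hhα : h ≤ h ^ α := by
    have := Real.rpow_le_rpow_of_exponent_ge hxy0 hxy hα1.le
    rwa [Real.rpow_one] at this
  calc _ ≤ ∑ j ∈ Finset.range J, (c₀ * (A * ω * (B * bracket x ^ (-k))) *
          (((2 : ℝ) ^ (j + 1))⁻¹ ^ α * min 1 (h / ((2 : ℝ) ^ (j + 1))⁻¹)) +
        A * 2 ^ d * B * h ^ α * (mass k x (2 ^ (j + 1)) / ((2 : ℝ) ^ (j + 1)) ^ d)) := by
        refine Finset.sum_le_sum fun j _ => ?_
        rw [conv_dyadicKer hF.cont _ _ hφ, conv_dyadicKer hF.cont _ _ hφ, add_sub_add_comm]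
        refine (norm_add_le _ _).trans (add_le_add
          (small_second_sub (by linarith) hα.le hF hφ hφl h0 j hxy) ?_)
        have hr : (0 : ℝ) < 2 ^ j := by positivity
        have hr1 : (1 : ℝ) ≤ 2 ^ j := one_le_pow₀ (by norm_num)
        refine (hφ.large_sub_le hφl hF _ hr (hxy.trans hr1)).trans ?_
        rw [abs_coef _ _ hr, ← hd]
        have e : 2 * (2 : ℝ) ^ j = 2 ^ (j + 1) := by rw [pow_succ]; ring
        rw [e]
        have hm := mass_nonneg k x ((2 : ℝ) ^ (j + 1))
        have hdiv : h / 2 ^ j ≤ h ^ α := (div_le_self hxy0.le hr1).trans hhα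
        calc _ ≤ ((2 : ℝ) ^ j) ^ 0 / (2 ^ j) ^ d * A * h ^ α * (B * mass k x (2 ^ (j + 1))) := by
              gcongr
          _ = _ := by
              rw [pow_succ (2 : ℝ) j, mul_pow]
              field_simp
    _ ≤ c₀ * (A * ω * (B * bracket x ^ (-k))) * (C' * h ^ α) +
        A * 2 ^ d * B * h ^ α * (C * (Real.log (4 * bracket x) * bracket x ^ (-k))) := by
        rw [Finset.sum_add_distrib, ← Finset.mul_sum, ← Finset.mul_sum]
        gcongr
        · exact hmin h hxy0 hxy J
        · refine le_trans ?_ (hsum x (J + 1))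
          rw [Finset.sum_range_succ']
          exact le_add_of_nonneg_right (div_nonneg (mass_nonneg _ _ _) (by positivity))
    _ ≤ c₀ * (A * ω * (B * (Real.log (4 * bracket x) * bracket x ^ (-k)))) * (C' * h ^ α) +
        A * 2 ^ d * B * h ^ α * (C * (Real.log (4 * bracket x) * bracket x ^ (-k))) := by
        gcongr
        exact le_mul_of_one_le_left (by positivity) hlog
    _ = (c₀ * (A * ω) * C' + A * 2 ^ d * C) * B *
          (Real.log (4 * bracket x) * bracket x ^ (-k)) * h ^ α := by ring
    _ ≤ _ := mul_le_mul_of_nonneg_right (mul_le_mul_of_nonneg_right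
        (mul_le_mul_of_nonneg_right (by linarith) hB) (by positivity)) (by positivity)

end Dyadic

/-! ### The potential -/

section Potential

variable {E : Type*} [NormedAddCommGroup E] [InnerProductSpace ℝ E] [FiniteDimensional ℝ E]
  [MeasureSpace E] [BorelSpace E] [(volume : Measure E).IsAddHaarMeasure]
variable {W : Type*} [NormedAddCommGroup W] [NormedSpace ℝ W]

lemma exists_isProfile {φ : E → W} (hφ : Continuous φ) (hs : ∀ z, 1 < ‖z‖ → φ z = 0) :
    ∃ A, IsProfile A φ := by
  obtain ⟨A, hA⟩ := (hasCompactSupport_of_norm hs).exists_bound_of_continuous hφ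
  exact ⟨A, hφ, hs, hA⟩

lemma hasFDerivAt_conv_dyadicKer {F : E → ℝ} (hF : Continuous F) (p j : ℕ) {A : ℝ} {φ : E → W}
    (hφ : IsProfile A φ) (hφ1 : ContDiff ℝ 1 φ) {D : E → E →L[ℝ] W} (hD : fderiv ℝ φ = D) (x : E) :
    HasFDerivAt (conv F (dyadicKer (p + 1) j φ)) (conv F (dyadicKer p j D) x) x := by
  have h := hasFDerivAt_conv hF (contDiff_dyadicKer (m := 1) (p + 1) j hφ1)
    (hasCompactSupport_dyadicKer (p + 1) j hφ) x
  rw [fderiv_dyadicKer p j hφ1, hD] at h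
  exact h

/-- Summable majorant, uniform in `x`, for the pieces of the potential (`p = 2`) and of its first
derivative (`p = 1`). -/
lemma integral_norm_dyadicKer_le {k α A : ℝ} (hk : 2 < k) (hkd : k ≤ finrank ℝ E) (hα : 0 < α)
    (hα1 : α ≤ 1) {φ : E → W} (hφ : IsProfile A φ) :
    ∃ b : ℕ → ℝ, Summable b ∧ ∀ (B : ℝ) (F : E → ℝ), IsSource k α B F → ∀ p, 1 ≤ p → p ≤ 2 →
      ∀ j x, ∫ t, ‖F t • dyadicKer p j φ (x - t)‖ ≤ B * b j := by
  obtain ⟨b, hb, hlarge⟩ := large_uniform hk hkd hφ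
  refine ⟨fun j => A * volume.real (closedBall (0 : E) 1) * ((2 : ℝ) ^ (j + 1))⁻¹ ^ α + b j,
    ((summable_small hα).mul_left _).add hb, fun B F hF p hp1 hp2 j x => ?_⟩
  have i1 := (hφ.integrable (((2 : ℝ) ^ (j + 1))⁻¹ ^ p / ((2 : ℝ) ^ (j + 1))⁻¹ ^ finrank ℝ E)
    (r := ((2 : ℝ) ^ (j + 1))⁻¹) (by positivity) hF.cont x).norm
  have i2 := (hφ.integrable (((2 : ℝ) ^ j) ^ p / ((2 : ℝ) ^ j) ^ finrank ℝ E)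
    (r := (2 : ℝ) ^ j) (by positivity) hF.cont x).norm
  rw [mul_add]
  refine le_trans ?_ (add_le_add (small_uniform (by linarith) hα1 hF hφ p hp1 j x)
    (hlarge α B F hF p hp2 j x))
  rw [← integral_add i1 i2]
  refine integral_mono_of_nonneg (Filter.Eventually.of_forall fun t => norm_nonneg _) (i1.add i2)
    (Filter.Eventually.of_forall fun t => ?_)
  simp only [dyadicKer, smul_add]
  exact norm_add_le _ _

/-- Summable majorant, uniform in `x`, for the pieces of the second derivative; at small scales it
rests on the cancellation `h0`. -/
lemma norm_conv_dyadicKer_zero_le {k α A : ℝ} (hk : 2 < k) (hkd : k ≤ finrank ℝ E) (hα : 0 < α)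
    {φ : E → W} (hφ : IsProfile A φ)
    (h0 : ∀ (c r : ℝ), 0 < r → ∀ x, ∫ t, dil c r φ (x - t) = 0) :
    ∃ b : ℕ → ℝ, Summable b ∧ ∀ (B : ℝ) (F : E → ℝ), IsSource k α B F →
      ∀ j x, ‖conv F (dyadicKer 0 j φ) x‖ ≤ B * b j := by
  obtain ⟨b, hb, hlarge⟩ := large_uniform hk hkd hφ
  refine ⟨fun j => A * volume.real (closedBall (0 : E) 1) * ((2 : ℝ) ^ (j + 1))⁻¹ ^ α + b j,
    ((summable_small hα).mul_left _).add hb, fun B F hF j x => ?_⟩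
  rw [conv_dyadicKer hF.cont _ _ hφ, mul_add]
  have hA := hφ.nonneg
  have hB := hF.nonneg
  have hx : bracket x ^ (-k) ≤ 1 :=
    Real.rpow_le_one_of_one_le_of_nonpos (one_le_bracket x) (by linarith)
  refine (norm_add_le _ _).trans (add_le_add ((small_second hα.le hF hφ h0 j x).trans ?_)
    ((norm_integral_le_integral_norm _).trans (hlarge α B F hF 0 (by norm_num) j x)))
  calc _ ≤ A * volume.real (closedBall (0 : E) 1) * (B * 1) * ((2 : ℝ) ^ (j + 1))⁻¹ ^ α := by
        gcongr
    _ = _ := by ring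

lemma norm_tsum_sub_tsum_le {W : Type*} [NormedAddCommGroup W] [CompleteSpace W] {f g : ℕ → W}
    {b : ℕ → ℝ} {K : ℝ} (hb : Summable b) (hf : ∀ j, ‖f j‖ ≤ b j) (hg : ∀ j, ‖g j‖ ≤ b j)
    (h : ∀ J, ∑ j ∈ Finset.range J, ‖f j - g j‖ ≤ K) : ‖∑' j, f j - ∑' j, g j‖ ≤ K := by
  rw [← (hb.of_norm_bounded hf).tsum_sub (hb.of_norm_bounded hg)]
  exact norm_tsum_le_of_sum_range_le h

/-- The estimate on an arbitrary finite-dimensional space of dimension at least three, with decay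
rate at most the dimension and the source conditions in the form `IsSource`. -/
theorem potential_estimate (hd : 3 ≤ finrank ℝ E) {k α : ℝ} (hk : 2 < k)
    (hkd : k ≤ finrank ℝ E) (hα : 0 < α) (hα1 : α < 1) :
    ∃ C₁ C₂ : ℝ, 0 < C₁ ∧ 0 < C₂ ∧ ∀ (F : E → ℝ) (B : ℝ) (u : E → ℝ), IsSource k α B F →
      (∀ x, u x = ∫ y, ‖x - y‖ ^ ((2 : ℝ) - finrank ℝ E) * F y) →
      Differentiable ℝ u ∧ Differentiable ℝ (fderiv ℝ u) ∧
      (∀ x, ‖fderiv ℝ (fderiv ℝ u) x‖ ≤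
        C₁ * B * (Real.log (4 * bracket x) * bracket x ^ (-k))) ∧
      ∀ x y, 0 < ‖y - x‖ → ‖y - x‖ ≤ 1 →
        ‖fderiv ℝ (fderiv ℝ u) y - fderiv ℝ (fderiv ℝ u) x‖ ≤
          C₂ * B * (Real.log (4 * bracket x) * bracket x ^ (-k)) * ‖y - x‖ ^ α := by
  obtain ⟨ψ, hψ, hψs, hψsum⟩ := exists_dyadic_kernel (E := E) (finrank ℝ E) hd
  have hψ1 : ContDiff ℝ 1 ψ := hψ.of_le (by norm_num)
  -- `D1`, `D2` are the derivatives of `ψ`, abstracted so that unification never unfolds them.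
  obtain ⟨D1, hD1eq⟩ : ∃ D, fderiv ℝ ψ = D := ⟨_, rfl⟩
  obtain ⟨D2, hD2eq⟩ : ∃ D, fderiv ℝ D1 = D := ⟨_, rfl⟩
  have hD1 : ContDiff ℝ 2 D1 := hD1eq ▸ hψ.fderiv_right (by norm_num)
  have hD2 : ContDiff ℝ 1 D2 := hD2eq ▸ hD1.fderiv_right (by norm_num)
  have hD1s : ∀ z, 1 < ‖z‖ → D1 z = 0 := hD1eq ▸ fderiv_eq_zero_of_norm hψs
  have hD2s : ∀ z, 1 < ‖z‖ → D2 z = 0 := hD2eq ▸ fderiv_eq_zero_of_norm hD1s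
  obtain ⟨A₀, hp0⟩ := exists_isProfile hψ.continuous hψs
  obtain ⟨A₁, hp1⟩ := exists_isProfile hD1.continuous hD1s
  obtain ⟨A₂, hp2⟩ := exists_isProfile hD2.continuous hD2s
  obtain ⟨L, hL⟩ := hD2.lipschitzWith_of_hasCompactSupport (hasCompactSupport_of_norm hD2s)
    (by norm_num)
  have hp2' : IsProfile (max A₂ L) D2 :=
    ⟨hp2.cont, hp2.supp, fun z => (hp2.bound z).trans (le_max_left _ _)⟩
  have hlip : ∀ z w, ‖D2 z - D2 w‖ ≤ max A₂ L * ‖z - w‖ := fun z w =>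
    (hL.norm_sub_le z w).trans (by gcongr; exact le_max_right _ _)
  have h0 : ∀ (c r : ℝ), 0 < r → ∀ x, ∫ t, dil c r D2 (x - t) = 0 := fun c r hr x =>
    hD2eq ▸ integral_dil_fderiv_eq_zero hp1 (hD1.of_le (by norm_num)) c hr x
  obtain ⟨b₀, hb₀, hle₀⟩ := integral_norm_dyadicKer_le hk hkd hα hα1.le hp0
  obtain ⟨b₁, hb₁, hle₁⟩ := integral_norm_dyadicKer_le hk hkd hα hα1.le hp1
  obtain ⟨b₂, hb₂, hle₂⟩ := norm_conv_dyadicKer_zero_le hk hkd hα hp2' h0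
  obtain ⟨C₁, hC₁, hsum₁⟩ := second_sum_le hk hkd hα hp2' h0
  obtain ⟨C₂, hC₂, hsum₂⟩ := second_sub_sum_le hk hkd hα hα1 hp2' hlip h0
  refine ⟨C₁, C₂, hC₁, hC₂, fun F B u hF hu => ?_⟩
  have hs0 : ∀ x, Summable fun j => ∫ t, ‖F t • dyadicKer 2 j ψ (x - t)‖ := fun x =>
    Summable.of_nonneg_of_le (fun j => integral_nonneg fun t => norm_nonneg _)
      (fun j => hle₀ B F hF 2 (by norm_num) le_rfl j x) (hb₀.mul_left B)
  have hu_hasSum : ∀ x, HasSum (fun j => conv F (dyadicKer 2 j ψ) x) (u x) := by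
    intro x
    have h := hasSum_integral_of_summable_integral_norm
      (F := fun (j : ℕ) t => F t • dyadicKer 2 j ψ (x - t))
      (fun j => integrable_conv hF.cont (contDiff_dyadicKer (m := 1) 2 j hψ1).continuous
        (hasCompactSupport_dyadicKer 2 j hp0) x) (hs0 x)
    have e : (∫ t, ∑' j, F t • dyadicKer 2 j ψ (x - t)) = u x := by
      rw [hu]
      refine integral_congr_ae (Filter.Eventually.of_forall fun t => ?_)
      have ht : HasSum (fun j => dyadicKer 2 j ψ (x - t)) (‖x - t‖ ^ ((2 : ℝ) - finrank ℝ E)) :=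
        hψsum (x - t)
      simpa [mul_comm] using (ht.const_smul (F t)).tsum_eq
    rw [e] at h
    exact h
  have hueq : u = fun x => ∑' j, conv F (dyadicKer 2 j ψ) x :=
    funext fun x => (hu_hasSum x).tsum_eq.symm
  have hbound₁ : ∀ j x, ‖conv F (dyadicKer 1 j D1) x‖ ≤ B * b₁ j := fun j x =>
    (norm_integral_le_integral_norm _).trans (hle₁ B F hF 1 le_rfl (by norm_num) j x)
  have hdu : ∀ x, HasFDerivAt u (∑' j, conv F (dyadicKer 1 j D1) x) x := fun x => by
    rw [hueq]
    exact hasFDerivAt_tsum (hb₁.mul_left B)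
      (fun j x => hasFDerivAt_conv_dyadicKer hF.cont 1 j hp0 hψ1 hD1eq x) hbound₁
      (hu_hasSum 0).summable x
  have hdueq : fderiv ℝ u = fun x => ∑' j, conv F (dyadicKer 1 j D1) x :=
    funext fun x => (hdu x).fderiv
  have hddu : ∀ x, HasFDerivAt (fderiv ℝ u) (∑' j, conv F (dyadicKer 0 j D2) x) x := fun x => by
    rw [hdueq]
    exact hasFDerivAt_tsum (hb₂.mul_left B)
      (fun j x => hasFDerivAt_conv_dyadicKer hF.cont 0 j hp1 (hD1.of_le (by norm_num)) hD2eq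
        x)
      (hle₂ B F hF) (Summable.of_norm_bounded (hb₁.mul_left B) fun j => hbound₁ j 0) x
  refine ⟨fun x => (hdu x).differentiableAt, fun x => (hddu x).differentiableAt, fun x => ?_,
    fun x y hxy0 hxy => ?_⟩
  · rw [(hddu x).fderiv]
    exact norm_tsum_le_of_sum_range_le (hsum₁ B F hF x)
  · rw [(hddu x).fderiv, (hddu y).fderiv]
    exact norm_tsum_sub_tsum_le (hb₂.mul_left B) (hle₂ B F hF · y) (hle₂ B F hF · x) (hsum₂ B F hF x y hxy0 hxy)

/-- The pointwise source hypothesis gives `IsSource`, also for any smaller decay rate. A point at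
distance one from `x` always exists, so the hypothesis at `x` is never vacuous. -/
lemma isSource_of_le [Nontrivial E] {k k' α B : ℝ} {F : E → ℝ} (hkk : k' ≤ k) (hα : 0 < α)
    (hF : ∀ x y : E, 0 < ‖x - y‖ → ‖x - y‖ ≤ 1 →
      bracket x ^ k * (|F x| + |F x - F y| / ‖x - y‖ ^ α) ≤ B) :
    IsSource k' α B F := by
  have key : ∀ x y : E, 0 < ‖x - y‖ → ‖x - y‖ ≤ 1 →
      |F x| + |F x - F y| / ‖x - y‖ ^ α ≤ B * bracket x ^ (-k) := fun x y h1 h2 => by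
    have hx := bracket_pos x
    rw [Real.rpow_neg hx.le, ← div_eq_mul_inv, le_div_iff₀ (by positivity), mul_comm]
    exact hF x y h1 h2
  have hnear : ∀ x : E, ∃ y, ‖x - y‖ = 1 := fun x => by
    obtain ⟨v, hv⟩ := exists_norm_eq E (zero_le_one (α := ℝ))
    exact ⟨x - v, by simpa using hv⟩
  have hb : ∀ x, |F x| ≤ B * bracket x ^ (-k) := fun x => by
    obtain ⟨y, hy⟩ := hnear x
    exact (le_add_of_nonneg_right (by positivity)).trans (key x y (by simp [hy]) hy.le)
  have hB : 0 ≤ B := by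
    have := (abs_nonneg _).trans (hb 0)
    have hp : 0 < bracket (0 : E) ^ (-k) := Real.rpow_pos_of_pos (bracket_pos _) _
    exact nonneg_of_mul_nonneg_left this hp
  have hmono : ∀ x : E, B * bracket x ^ (-k) ≤ B * bracket x ^ (-k') := fun x =>
    mul_le_mul_of_nonneg_left
      (Real.rpow_le_rpow_of_exponent_le (one_le_bracket x) (by linarith)) hB
  have hhol : ∀ x t, ‖x - t‖ ≤ 1 → |F t - F x| ≤ B * bracket x ^ (-k') * ‖x - t‖ ^ α := by
    intro x t hxt
    rcases (norm_nonneg (x - t)).eq_or_lt with h | h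
    · have : x = t := by rw [← sub_eq_zero, ← norm_eq_zero]; exact h.symm
      subst this
      simp [hα.ne']
    · rw [abs_sub_comm, ← div_le_iff₀ (by positivity)]
      exact (le_add_of_nonneg_left (abs_nonneg _)).trans ((key x t h hxt).trans (hmono x))
  refine ⟨hB, ?_, fun x => (hb x).trans (hmono x), hhol⟩
  rw [continuous_iff_continuousAt]
  intro x
  have hlim : Filter.Tendsto (fun t => B * bracket x ^ (-k') * ‖x - t‖ ^ α) (nhds x)
      (nhds 0) := by
    have hc : Continuous fun t : E => B * bracket x ^ (-k') * ‖x - t‖ ^ α :=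
      continuous_const.mul ((continuous_const.sub continuous_id).norm.rpow_const
        fun _ => Or.inr hα.le)
    simpa [hα.ne'] using hc.tendsto x
  rw [ContinuousAt, tendsto_iff_norm_sub_tendsto_zero]
  refine squeeze_zero' (Filter.Eventually.of_forall fun t => norm_nonneg _) ?_ hlim
  filter_upwards [closedBall_mem_nhds x one_pos] with t ht
  refine hhol x t ?_
  rwa [mem_closedBall, dist_eq_norm, norm_sub_rev] at ht

end Potential

/-- Lemma A.2 (`newt2`): weighted `C^{2,α₀}` decay estimates for the Newton
potential `u(x) = ∫ ‖x−y‖^{2−n} F(y) dy` of a source satisfying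
`⟨x⟩ᵏ (|F(x)| + |F(x)−F(y)|/‖x−y‖^{α₀}) ≤ B` for all `x` and all `y` with
`0 < ‖x−y‖ ≤ 1`, where `⟨x⟩ = √(1+‖x‖²)`, `k > 2`, `n ≥ 3`, `α₀ ∈ (0,1)`. -/
theorem newton_potential_estimate_second
    (n : ℕ) (hn : 3 ≤ n) (k : ℝ) (hk : 2 < k) (α₀ : ℝ) (hα : α₀ ∈ Set.Ioo (0 : ℝ) 1) :
    ∃ C : ℝ, 0 < C ∧
      ∀ (F : EuclideanSpace ℝ (Fin n) → ℝ) (B : ℝ)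
        (u : EuclideanSpace ℝ (Fin n) → ℝ),
        (∀ x y : EuclideanSpace ℝ (Fin n), 0 < ‖x - y‖ → ‖x - y‖ ≤ 1 →
          Real.sqrt (1 + ‖x‖ ^ 2) ^ k *
            (|F x| + |F x - F y| / ‖x - y‖ ^ α₀) ≤ B) →
        (∀ x : EuclideanSpace ℝ (Fin n), u x = ∫ y, ‖x - y‖ ^ ((2 : ℝ) - n) * F y) →
        Differentiable ℝ u ∧ Differentiable ℝ (fderiv ℝ u) ∧
        ∀ x : EuclideanSpace ℝ (Fin n),
          (‖fderiv ℝ (fderiv ℝ u) x‖ ≤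
            C * B * Real.log (4 * Real.sqrt (1 + ‖x‖ ^ 2)) *
              (Real.sqrt (1 + ‖x‖ ^ 2) ^ (-k) +
                Real.sqrt (1 + ‖x‖ ^ 2) ^ (-(n : ℝ)))) ∧
          ∀ y : EuclideanSpace ℝ (Fin n), 0 < ‖y - x‖ → ‖y - x‖ ≤ 1 →
            ‖fderiv ℝ (fderiv ℝ u) x‖ +
              ‖fderiv ℝ (fderiv ℝ u) y - fderiv ℝ (fderiv ℝ u) x‖ / ‖y - x‖ ^ α₀ ≤
              C * B * Real.log (4 * Real.sqrt (1 + ‖x‖ ^ 2)) *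
                (Real.sqrt (1 + ‖x‖ ^ 2) ^ (-k) +
                  Real.sqrt (1 + ‖x‖ ^ 2) ^ (-(n : ℝ))) := by
  -- Decay faster than `⟨x⟩⁻ⁿ` gains nothing for the potential, so `k` is lowered to `min k n`.
  have hkmin : 2 < min k (n : ℝ) := lt_min hk (by exact_mod_cast hn)
  have hfin : finrank ℝ (EuclideanSpace ℝ (Fin n)) = n := finrank_euclideanSpace_fin
  have : Nontrivial (EuclideanSpace ℝ (Fin n)) :=
    Module.nontrivial_of_finrank_pos (R := ℝ) (by omega)
  obtain ⟨C₁, C₂, hC₁, hC₂, hmain⟩ := potential_estimate (E := EuclideanSpace ℝ (Fin n))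
    (by omega) hkmin (by rw [hfin]; exact min_le_right _ _) hα.1 hα.2
  refine ⟨C₁ + C₂, by linarith, fun F B u hF hu => ?_⟩
  have hsrc : IsSource (min k n) α₀ B F :=
    isSource_of_le (min_le_left k n) hα.1 hF
  have hB := hsrc.nonneg
  obtain ⟨hd1, hd2, hle, hsub⟩ := hmain F B u hsrc (by rw [hfin]; exact hu)
  refine ⟨hd1, hd2, fun x => ?_⟩
  have hx : 0 < bracket x := bracket_pos x
  have hlog : 0 ≤ Real.log (4 * bracket x) := zero_le_one.trans (one_le_log_four_bracket x)
  have hw : bracket x ^ (-min k (n : ℝ)) ≤ bracket x ^ (-k) + bracket x ^ (-(n : ℝ)) := by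
    rcases min_choice k (n : ℝ) with h | h <;> rw [h]
    · exact le_add_of_nonneg_right (by positivity)
    · exact le_add_of_nonneg_left (by positivity)
  change ‖fderiv ℝ (fderiv ℝ u) x‖ ≤ (C₁ + C₂) * B * Real.log (4 * bracket x) *
      (bracket x ^ (-k) + bracket x ^ (-(n : ℝ))) ∧
    ∀ y : EuclideanSpace ℝ (Fin n), 0 < ‖y - x‖ → ‖y - x‖ ≤ 1 →
      ‖fderiv ℝ (fderiv ℝ u) x‖ +
        ‖fderiv ℝ (fderiv ℝ u) y - fderiv ℝ (fderiv ℝ u) x‖ / ‖y - x‖ ^ α₀ ≤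
      (C₁ + C₂) * B * Real.log (4 * bracket x) * (bracket x ^ (-k) + bracket x ^ (-(n : ℝ)))
  have hfinal : (C₁ + C₂) * B * (Real.log (4 * bracket x) * bracket x ^ (-min k (n : ℝ))) ≤
      (C₁ + C₂) * B * Real.log (4 * bracket x) * (bracket x ^ (-k) + bracket x ^ (-(n : ℝ))) := by
    rw [← mul_assoc]
    exact mul_le_mul_of_nonneg_left hw (by positivity)
  constructor
  · refine (hle x).trans (le_trans ?_ hfinal)
    exact mul_le_mul_of_nonneg_right (mul_le_mul_of_nonneg_right (by linarith) hB) (by positivity)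
  · intro y hy0 hy1
    refine le_trans ?_ hfinal
    rw [add_mul, add_mul]
    refine add_le_add (hle x) ?_
    rw [div_le_iff₀ (by positivity)]
    exact hsub x y hy0 hy1
end

section
/- Suppose f : {(x, y) : x ∈ (−1, 1), y ∈ [0, 1)} → ℝ is Lipschitz continuous on its domain and is differentiable at (0, 0) (i.e. f has a total derivative at (0,0) relative to the domain), with f(0, 0) = 0 and ∂_x f(0, 0) ≠ 0. Then there exist η₀ > 0 and a function X : [0, η₀) → (−1, 1) such that X(0) = 0, f(X(y), y) = 0 for every y ∈ [0, η₀), and X is differentiable at 0 (its one-sided derivative at 0 exists). -/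
/-!
Write `a = ∂ₓf(0,0)`, `b = ∂_yf(0,0)` and `m = -b/a`, the expected slope of the solution curve. On the
cone `|x - m y| ≤ y` the norm of `(x, y)` is at most `(|m| + 1) y`, so differentiability at the origin
reads `f (x, y) = a (x - m y) + o(y)` uniformly on the cone (`cone_estimate`). For small `y` this makes
`a * f (·, y)` change sign between `m y - y` and `m y + y`, so the intermediate value theorem gives
a zero in the cone (in this one-dimensional setting it plays the role of the Brouwer fixed point theorem).
At any such zero the estimate forces `x - m y = o(y)`, so every choice
of zeros in the cone is differentiable at `0` with derivative `m`; no regularity of the choice is needed.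
-/

open NNReal

/-- The first-order expansion of `f` at the origin, uniform on the cone `|x - m y| ≤ y`, where `m` is
the slope of the kernel of `Df`. -/
lemma cone_estimate {f : ℝ × ℝ → ℝ} {Df : ℝ × ℝ →L[ℝ] ℝ}
    (hdiff : HasFDerivWithinAt f Df (Set.Ioo (-1 : ℝ) 1 ×ˢ Set.Ico (0 : ℝ) 1) (0, 0))
    (hf0 : f (0, 0) = 0) {m : ℝ} (hm : Df (m, 1) = 0) {ε : ℝ} (hε : 0 < ε) :
    ∃ δ > 0, ∀ x y : ℝ, 0 ≤ y → y < δ → |x - m * y| ≤ y →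
      (x, y) ∈ Set.Ioo (-1 : ℝ) 1 ×ˢ Set.Ico (0 : ℝ) 1 ∧
        |f (x, y) - Df (1, 0) * (x - m * y)| ≤ ε * y := by
  have hK : 0 < |m| + 1 := by positivity
  have ho := hdiff.isLittleO.def (div_pos hε hK)
  obtain ⟨r, hr, hball⟩ := Metric.mem_nhdsWithin_iff.mp ho
  refine ⟨min r 1 / (|m| + 1), by positivity, fun x y hy hyδ hx => ?_⟩
  have hyK : (|m| + 1) * y < min r 1 := by
    rw [lt_div_iff₀ hK] at hyδ; linarith
  have hxK : |x| ≤ (|m| + 1) * y := by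
    calc |x| = |(x - m * y) + m * y| := by ring_nf
      _ ≤ |x - m * y| + |m * y| := abs_add_le _ _
      _ ≤ y + |m| * y := by rw [abs_mul, abs_of_nonneg hy]; gcongr
      _ = (|m| + 1) * y := by ring
  have hyK' : y ≤ (|m| + 1) * y := by nlinarith [abs_nonneg m]
  have hnorm : ‖(x, y)‖ ≤ (|m| + 1) * y := by
    rw [Prod.norm_def]
    exact max_le hxK (by simpa [abs_of_nonneg hy] using hyK')
  have hr' := min_le_left r 1
  have h1' := min_le_right r 1
  have hmem : (x, y) ∈ Set.Ioo (-1 : ℝ) 1 ×ˢ Set.Ico (0 : ℝ) 1 :=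
    ⟨abs_lt.mp (by linarith), hy, by linarith⟩
  refine ⟨hmem, ?_⟩
  have hz : (x, y) - ((0, 0) : ℝ × ℝ) = (x, y) := by simp
  have hest := hball ⟨by
    rw [Metric.mem_ball, dist_eq_norm, hz]; linarith, hmem⟩
  rw [Set.mem_ofPred_eq, hz, hf0, sub_zero] at hest
  have hD : Df (x, y) = Df (1, 0) * (x - m * y) := by
    have : (x, y) = (x - m * y) • ((1, 0) : ℝ × ℝ) + y • ((m, 1) : ℝ × ℝ) := by
      ext <;> simp
      ring
    rw [this, map_add, map_smul, map_smul, hm]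
    simp [mul_comm]
  rw [hD, Real.norm_eq_abs] at hest
  calc _ ≤ ε / (|m| + 1) * ‖(x, y)‖ := hest
    _ ≤ ε / (|m| + 1) * ((|m| + 1) * y) := by gcongr
    _ = ε * y := by field_simp

/-- Theorem B.1 (`weakimp`): an implicit function theorem for a Lipschitz
function `f` on `(−1,1) × [0,1)` that is differentiable at `(0,0)` with
`f(0,0) = 0` and `∂ₓf(0,0) ≠ 0`: there are `η₀ > 0` and `X : [0,η₀) → (−1,1)`
with `X(0) = 0`, `f(X(y), y) = 0`, and `X` one-sidedly differentiable at `0`. -/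
theorem lipschitz_implicit_function_theorem
    (f : ℝ × ℝ → ℝ) (L : ℝ≥0)
    (hlip : LipschitzOnWith L f (Set.Ioo (-1 : ℝ) 1 ×ˢ Set.Ico (0 : ℝ) 1))
    (Df : ℝ × ℝ →L[ℝ] ℝ)
    (hdiff : HasFDerivWithinAt f Df (Set.Ioo (-1 : ℝ) 1 ×ˢ Set.Ico (0 : ℝ) 1) (0, 0))
    (hf0 : f (0, 0) = 0)
    (hdx : Df (1, 0) ≠ 0) :
    ∃ η₀ : ℝ, 0 < η₀ ∧ ∃ X : ℝ → ℝ, X 0 = 0 ∧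
      (∀ y : ℝ, 0 ≤ y → y < η₀ → X y ∈ Set.Ioo (-1 : ℝ) 1 ∧ f (X y, y) = 0) ∧
      ∃ d : ℝ, HasDerivWithinAt X d (Set.Ico 0 η₀) 0 := by
  set a := Df (1, 0) with ha
  obtain ⟨m, hm⟩ : ∃ m : ℝ, Df (m, 1) = 0 := by
    refine ⟨-Df (0, 1) / a, ?_⟩
    have : ((-Df (0, 1) / a, 1) : ℝ × ℝ) =
        (-Df (0, 1) / a) • ((1, 0) : ℝ × ℝ) + ((0, 1) : ℝ × ℝ) := by ext <;> simp
    rw [this, map_add, map_smul, ← ha, smul_eq_mul, div_mul_cancel₀ _ hdx]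
    ring
  have hapos : 0 < |a| := abs_pos.mpr hdx
  obtain ⟨η, hη, hcone⟩ := cone_estimate hdiff hf0 hm hapos
  have hex : ∀ y : ℝ, 0 ≤ y → y < η → ∃ x, |x - m * y| ≤ y ∧ f (x, y) = 0 := by
    intro y hy hyη
    have hcont : ContinuousOn (fun x => a * f (x, y)) (Set.Icc (m * y - y) (m * y + y)) := by
      refine continuousOn_const.mul (hlip.continuousOn.comp (by fun_prop) fun x hx => ?_)
      exact (hcone x y hy hyη (abs_le.mpr ⟨by linarith [hx.1], by linarith [hx.2]⟩)).1
    have hlo := (hcone (m * y - y) y hy hyη (by simp [abs_of_nonneg hy])).2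
    have hhi := (hcone (m * y + y) y hy hyη (by simp [abs_of_nonneg hy])).2
    rw [← ha] at hlo hhi
    -- Multiplying the cone estimates by `a` makes the sign change independent of the sign of `a`.
    have hmul : ∀ t, |t| ≤ |a| * y → |a * t| ≤ a * a * y := fun t ht => by
      rw [abs_mul, ← abs_mul_abs_self a, mul_assoc]; gcongr
    have hlo' : a * f (m * y - y, y) ≤ 0 := by
      have := (abs_le.mp (hmul _ hlo)).2; linarith
    have hhi' : 0 ≤ a * f (m * y + y, y) := by
      have := (abs_le.mp (hmul _ hhi)).1; linarith
    obtain ⟨x, hx, hx0⟩ := intermediate_value_Icc (by linarith) hcont ⟨hlo', hhi'⟩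
    exact ⟨x, abs_le.mpr ⟨by linarith [hx.1], by linarith [hx.2]⟩,
      (mul_eq_zero.mp hx0).resolve_left hdx⟩
  choose! X hX using hex
  have hX0 : X 0 = 0 := by simpa using (hX 0 le_rfl hη).1
  refine ⟨η, hη, X, hX0, fun y hy hyη =>
    ⟨(hcone _ y hy hyη (hX y hy hyη).1).1.1, (hX y hy hyη).2⟩, m, ?_⟩
  rw [hasDerivWithinAt_iff_isLittleO, Asymptotics.isLittleO_iff]
  intro c hc
  obtain ⟨δ, hδ, hest⟩ := cone_estimate hdiff hf0 hm (mul_pos hapos hc)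
  filter_upwards [self_mem_nhdsWithin, mem_nhdsWithin_of_mem_nhds (Iio_mem_nhds hδ)] with y hy hyδ
  have h := (hest (X y) y hy.1 hyδ (hX y hy.1 hy.2).1).2
  rw [(hX y hy.1 hy.2).2, ← ha, zero_sub, abs_neg, abs_mul, mul_assoc] at h
  simpa [hX0, abs_of_nonneg hy.1, mul_comm] using le_of_mul_le_mul_left h hapos
end

section
/- Let M ∈ ℝ and γ > 0, and suppose r̃ ≥ M + γ and θ ∈ [0, π]. Set Δ = (r̃ − M)² − γ², ρ = √Δ · sin θ, and z = (r̃ − M) cos θ. Then r̃ = M + (1/√2) · √( ρ² + z² + γ² + √( ρ⁴ + 2ρ²(z² + γ²) + (z² − γ²)² ) ). -/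
/-!
Write `x = rt - M` and `c = cos θ`. Then `ρ² + z² + γ² = x² + γ² c²`, and the inner radicand is
`(ρ² + z² + γ²)² - 4 γ² z² = (x² - γ² c²)²`. Since `x ≥ γ`, the inner root is `x² - γ² c²`, so the
outer radicand is `2 x²`, whose root is `√2 x` because `x ≥ 0`.
-/

/-- The explicit inversion of the Kerr isothermal coordinates: with
`Δ = (r̃−M)² − γ²`, `ρ = √Δ sinθ`, `z = (r̃−M)cosθ`, `r̃ ≥ M + γ`, `θ ∈ [0,π]`,
the Boyer–Lindquist radius is recovered as
`r̃ = M + (1/√2)·√(ρ² + z² + γ² + √(ρ⁴ + 2ρ²(z²+γ²) + (z²−γ²)²))`. -/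
theorem kerr_isothermal_inversion
    (M γ rt θ : ℝ) (hγ : 0 < γ) (hr : M + γ ≤ rt)
    (hθ : θ ∈ Set.Icc (0 : ℝ) Real.pi)
    (Δ ρ z : ℝ)
    (hΔ : Δ = (rt - M) ^ 2 - γ ^ 2)
    (hρ : ρ = Real.sqrt Δ * Real.sin θ)
    (hz : z = (rt - M) * Real.cos θ) :
    rt = M + (1 / Real.sqrt 2) *
      Real.sqrt (ρ ^ 2 + z ^ 2 + γ ^ 2 +
        Real.sqrt (ρ ^ 4 + 2 * ρ ^ 2 * (z ^ 2 + γ ^ 2) + (z ^ 2 - γ ^ 2) ^ 2)) := by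
  have hx : 0 ≤ rt - M := by linarith
  have hΔ0 : 0 ≤ Δ := by rw [hΔ]; nlinarith
  have hρ2 : ρ ^ 2 = ((rt - M) ^ 2 - γ ^ 2) * (1 - Real.cos θ ^ 2) := by
    rw [hρ, mul_pow, Real.sq_sqrt hΔ0, Real.sin_sq, hΔ]
  have hz2 : z ^ 2 = (rt - M) ^ 2 * Real.cos θ ^ 2 := by rw [hz, mul_pow]
  have hinner : ρ ^ 4 + 2 * ρ ^ 2 * (z ^ 2 + γ ^ 2) + (z ^ 2 - γ ^ 2) ^ 2
      = ((rt - M) ^ 2 - γ ^ 2 * Real.cos θ ^ 2) ^ 2 := by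
    rw [show ρ ^ 4 = (ρ ^ 2) ^ 2 by ring, hρ2, hz2]
    ring
  -- The sign that selects the correct branch of the inner root: `γ² cos² θ ≤ γ² ≤ (rt - M)²`.
  have hnonneg : 0 ≤ (rt - M) ^ 2 - γ ^ 2 * Real.cos θ ^ 2 := by
    nlinarith [mul_le_mul_of_nonneg_left (Real.cos_sq_le_one θ) (sq_nonneg γ)]
  have houter : ρ ^ 2 + z ^ 2 + γ ^ 2 + ((rt - M) ^ 2 - γ ^ 2 * Real.cos θ ^ 2)
      = 2 * (rt - M) ^ 2 := by
    rw [hρ2, hz2]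
    ring
  rw [hinner, Real.sqrt_sq hnonneg, houter, Real.sqrt_mul (by norm_num), Real.sqrt_sq hx]
  field_simp
  ring
end

section
/- Let ρ₀ > 0, c₀ ≥ 0 and c₁ ≥ 0, and let f : [ρ₀, ∞) → ℝ be a measurable function with |f(ρ)| ≤ c₁ for all ρ ≥ ρ₀. Suppose that for every ρ ≥ ρ₀ one has |f(ρ)| ≤ c₀ ∫_ρ^∞ τ^{−3} |f(τ)| dτ. Then f(ρ) = 0 for all ρ ≥ ρ₀. -/
open MeasureTheory

/-!
Iterating the integral inequality, starting from `|f| ≤ c₁`, gives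
`|f ρ| ≤ c₁ (c₀ / (2ρ²))ʲ / j!` for every `j` (`volterra_iterate`): each step uses
`∫_ρ^∞ τ^{-(2j+3)} dτ = ρ^{-(2j+2)} / (2j+2)`, whose factor `2(j+1)` supplies the next factor
of the factorial. The right-hand side tends to `0` as `j → ∞`, so `f ρ = 0`.
-/

lemma integrableOn_Ioi_inv_pow (n : ℕ) {ρ : ℝ} (hρ : 0 < ρ) :
    IntegrableOn (fun τ : ℝ => (τ ^ (n + 2))⁻¹) (Set.Ioi ρ) := by
  have ha : (-((n + 2 : ℕ) : ℝ)) < -1 := by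
    push_cast
    linarith [(Nat.cast_nonneg n : (0 : ℝ) ≤ n)]
  refine (integrableOn_Ioi_rpow_of_lt ha hρ).congr_fun ?_ measurableSet_Ioi
  intro τ hτ
  have hτ0 : 0 < τ := hρ.trans hτ
  simp only [Real.rpow_neg hτ0.le, Real.rpow_natCast]

lemma integral_Ioi_inv_pow (n : ℕ) {ρ : ℝ} (hρ : 0 < ρ) :
    ∫ τ in Set.Ioi ρ, (τ ^ (n + 2))⁻¹ = (ρ ^ (n + 1))⁻¹ / (n + 1) := by
  have ha : (-((n + 2 : ℕ) : ℝ)) < -1 := by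
    push_cast
    linarith [(Nat.cast_nonneg n : (0 : ℝ) ≤ n)]
  have h := integral_Ioi_rpow_of_lt ha hρ
  have hcongr : ∫ τ in Set.Ioi ρ, (τ ^ (n + 2))⁻¹
      = ∫ τ in Set.Ioi ρ, τ ^ (-((n + 2 : ℕ) : ℝ)) := by
    refine setIntegral_congr_fun measurableSet_Ioi ?_
    intro τ hτ
    have hτ0 : 0 < τ := hρ.trans hτ
    simp only [Real.rpow_neg hτ0.le, Real.rpow_natCast]
  have he : (-((n + 2 : ℕ) : ℝ)) + 1 = -((n + 1 : ℕ) : ℝ) := by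
    push_cast
    ring
  rw [hcongr, h, he, Real.rpow_neg hρ.le, Real.rpow_natCast, neg_div_neg_eq]
  push_cast
  rfl

/-- The `j`-fold iterate of the integral inequality. -/
lemma volterra_iterate (ρ₀ c₀ c₁ : ℝ) (hρ₀ : 0 < ρ₀) (hc₀ : 0 ≤ c₀) (f : ℝ → ℝ)
    (hbd : ∀ ρ : ℝ, ρ₀ ≤ ρ → |f ρ| ≤ c₁)
    (hint : ∀ ρ : ℝ, ρ₀ ≤ ρ → |f ρ| ≤ c₀ * ∫ τ in Set.Ioi ρ, |f τ| / τ ^ 3) (j : ℕ) :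
    ∀ ρ : ℝ, ρ₀ ≤ ρ → |f ρ| ≤ c₁ * ((c₀ / (2 * ρ ^ 2)) ^ j / (j.factorial : ℝ)) := by
  induction j with
  | zero => simpa using hbd
  | succ j ih =>
    intro ρ hρ
    have hρ0 : 0 < ρ := hρ₀.trans_le hρ
    have hle : ∫ τ in Set.Ioi ρ, |f τ| / τ ^ 3
        ≤ ∫ τ in Set.Ioi ρ,
          c₁ * ((c₀ / 2) ^ j / (j.factorial : ℝ)) * (τ ^ (2 * j + 1 + 2))⁻¹ := by
      refine integral_mono_of_nonneg ?_ ((integrableOn_Ioi_inv_pow _ hρ0).const_mul _) ?_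
      · filter_upwards [ae_restrict_mem measurableSet_Ioi] with τ hτ
        have hτ0 : 0 < τ := hρ0.trans hτ
        simp only [Pi.zero_apply]
        positivity
      · filter_upwards [ae_restrict_mem measurableSet_Ioi] with τ hτ
        have hτ0 : 0 < τ := hρ0.trans hτ
        calc |f τ| / τ ^ 3
            ≤ c₁ * ((c₀ / (2 * τ ^ 2)) ^ j / (j.factorial : ℝ)) / τ ^ 3 := by
              gcongr
              exact ih τ (hρ.trans (le_of_lt hτ))
          _ = c₁ * ((c₀ / 2) ^ j / (j.factorial : ℝ)) * (τ ^ (2 * j + 1 + 2))⁻¹ := by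
              rw [← div_div, div_pow (c₀ / 2), ← pow_mul,
                show 2 * j + 1 + 2 = 2 * j + 3 by ring, pow_add]
              field_simp
    refine (hint ρ hρ).trans ((mul_le_mul_of_nonneg_left hle hc₀).trans_eq ?_)
    rw [integral_const_mul, integral_Ioi_inv_pow _ hρ0, ← div_div c₀ 2, div_pow (c₀ / 2),
      ← pow_mul, Nat.factorial_succ, show 2 * (j + 1) = 2 * j + 1 + 1 by ring, pow_succ (c₀ / 2)]
    push_cast
    have : (2 * (j : ℝ) + 1 + 1) = 2 * (j + 1) := by ring
    rw [this]
    field_simp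

/-- The Volterra-type uniqueness statement used to upgrade the modified
first-order system for `λ̊`: a bounded measurable function on `[ρ₀, ∞)`
satisfying `|f(ρ)| ≤ c₀ ∫_ρ^∞ τ⁻³ |f(τ)| dτ` vanishes identically. -/
theorem volterra_uniqueness
    (ρ₀ c₀ c₁ : ℝ) (hρ₀ : 0 < ρ₀) (hc₀ : 0 ≤ c₀) (hc₁ : 0 ≤ c₁)
    (f : ℝ → ℝ) (hmeas : Measurable f)
    (hbd : ∀ ρ : ℝ, ρ₀ ≤ ρ → |f ρ| ≤ c₁)
    (hint : ∀ ρ : ℝ, ρ₀ ≤ ρ →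
      |f ρ| ≤ c₀ * ∫ τ in Set.Ioi ρ, |f τ| / τ ^ 3) :
    ∀ ρ : ℝ, ρ₀ ≤ ρ → f ρ = 0 := by
  intro ρ hρ
  have hlim := (FloorSemiring.tendsto_pow_div_factorial_atTop (c₀ / (2 * ρ ^ 2))).const_mul c₁
  rw [mul_zero] at hlim
  have h0 : |f ρ| ≤ 0 := ge_of_tendsto' hlim
    (fun j => volterra_iterate ρ₀ c₀ c₁ hρ₀ hc₀ f hbd hint j ρ hρ)
  exact abs_nonpos_iff.mp h0
end
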